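/- arXiv:2010.12103 — 2 statements merged into one kernel-verified Lean document; each statement's English description precedes it below -/
import Mathlib

section
/- Let S = (s_1,…,s_m) be m i.i.d. samples from μ and let δ ∈ (0,1). With probability at least 1 − δ over S, R(F,m) ≤ R̂(F,S) + c ln(1/δ)/m + sqrt( (c ln(1/δ)/m)² + 2 c ln(1/δ) R̂(F,S) / m ). -/
/-!
The function `g(S) = m R̂(F,S) = E_σ sup_f ∑ σ_k f(s_k)`, divided by `c = b - a`, is self-bounding.
If `g_i` denotes the same quantity with the `i`-th sample point left out, then `g_i ≤ g` by Jensen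
(average over `σ_i`), `g - g_i ≤ c / 2` because one sign of `σ_i` contributes at most `b` and the
other at most `-a`, and `∑ (g - g_i) ≤ g` because the leave-one-out versions of a signed sum add up
to `m - 1` times that sum (`radAvg_selfBounding`).

A self-bounding function `Z` satisfies `P(Z ≤ E Z - t) ≤ exp (-t² / (2 E Z))`
(`SelfBounding.lower_tail`), which is proved by the entropy method. Tensorization of entropy,
together with its variational formula (`ent_tensor`), is applied to `exp (-l Z)` with comparison
functions `exp (-l Z_i)`. This gives the differential inequality `(exp l - 1) K'(l) ≤ K(l)` for
`K(l) = log E exp (-l Z)`, hence `K(l) / (1 - exp (-l))` is nonincreasing. Its limit at `0` is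
`-E Z`, so `K(l) ≤ -(1 - exp (-l)) E Z`, and Chernoff's bound applies.

Finally, with `L = log (1 / δ)` and `Z = g / c`, failure of the claimed inequality means
`E Z - Z - L > √(L² + 2 L Z)`. Squaring yields `Z < E Z - √(2 L E Z)`, an event of probability at
most `exp (-L) = δ`.
-/

open MeasureTheory

noncomputable section

/-- Map a Boolean to a `±1` sign: `true ↦ 1`, `false ↦ -1`. -/
def sgnB (x : Bool) : ℝ := if x then 1 else -1

/-- The `n`-Monte-Carlo Empirical Rademacher Average
`R̂ⁿ_m(F,S,σ) = (1/n) Σ_j sup_{f∈F} (1/m) Σ_i σ_{j,i} f(s_i)`. -/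
def mcera {X ι : Type*} (f : ι → X → ℝ) (n m : ℕ) (S : Fin m → X)
    (σ : Fin n → Fin m → Bool) : ℝ :=
  (n : ℝ)⁻¹ * ∑ j : Fin n, ⨆ l : ι, (m : ℝ)⁻¹ * ∑ k : Fin m, sgnB (σ j k) * f l (S k)

/-- Uniform measure on `n × m` sign matrices: the entries are independent
uniform Rademacher (±1) random variables. -/
def radMeasure (n m : ℕ) : Measure (Fin n → Fin m → Bool) :=
  (PMF.uniformOfFintype (Fin n → Fin m → Bool)).toMeasure

/-- The Empirical Rademacher Average `R̂(F,S) = E_σ[R̂ⁿ_m(F,S,σ)]`. -/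
def era {X ι : Type*} (f : ι → X → ℝ) (n m : ℕ) (S : Fin m → X) : ℝ :=
  ∫ σ, mcera f n m S σ ∂(radMeasure n m)

/-- The Rademacher Complexity `R(F,m) = E_S[R̂(F,S)]`, `S` being `m` i.i.d. samples. -/
def rc {X ι : Type*} [MeasurableSpace X] (f : ι → X → ℝ) (n m : ℕ) (μ : Measure X) : ℝ :=
  ∫ S : Fin m → X, era f n m S ∂(Measure.pi fun _ : Fin m => μ)

/-- `ẑ(S) = sup_{f∈F, 1≤i≤m} |f(s_i)|`. -/
def zhat {X ι : Type*} (f : ι → X → ℝ) {m : ℕ} (S : Fin m → X) : ℝ :=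
  ⨆ p : ι × Fin m, |f p.1 (S p.2)|

/-- `ν̂_F(S) = (1/m) sup_{f∈F} Σ_i |f(s_i)|`. -/
def nuhat {X ι : Type*} (f : ι → X → ℝ) {m : ℕ} (S : Fin m → X) : ℝ :=
  (m : ℝ)⁻¹ * ⨆ l : ι, ∑ k : Fin m, |f l (S k)|

/-- The empirical wimpy variance `σ̂²_F(S) = (1/m) sup_{f∈F} Σ_i f(s_i)²`. -/
def sigma2hat {X ι : Type*} (f : ι → X → ℝ) {m : ℕ} (S : Fin m → X) : ℝ :=
  (m : ℝ)⁻¹ * ⨆ l : ι, ∑ k : Fin m, (f l (S k)) ^ 2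

/-- The wimpy variance `σ²_F = sup_{f∈F} E_μ[f²]`. -/
def wimpyVar {X ι : Type*} [MeasurableSpace X] (f : ι → X → ℝ) (μ : Measure X) : ℝ :=
  ⨆ l : ι, ∫ x, (f l x) ^ 2 ∂μ

/-- The positive supremum deviation `SD⁺(F,S) = sup_{f∈F} ((1/m)Σ_i f(s_i) - E_μ[f])`. -/
def sdPlus {X ι : Type*} [MeasurableSpace X] (f : ι → X → ℝ) (μ : Measure X)
    {m : ℕ} (S : Fin m → X) : ℝ :=
  ⨆ l : ι, ((m : ℝ)⁻¹ * ∑ k : Fin m, f l (S k) - ∫ x, f l x ∂μ)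

/-- The negative supremum deviation `SD⁻(F,S) = sup_{f∈F} (E_μ[f] - (1/m)Σ_i f(s_i))`. -/
def sdMinus {X ι : Type*} [MeasurableSpace X] (f : ι → X → ℝ) (μ : Measure X)
    {m : ℕ} (S : Fin m → X) : ℝ :=
  ⨆ l : ι, ((∫ x, f l x ∂μ) - (m : ℝ)⁻¹ * ∑ k : Fin m, f l (S k))

/-- `η_F = sup_{f∈F} E_μ[f] - a`. -/
def etaF {X ι : Type*} [MeasurableSpace X] (f : ι → X → ℝ) (μ : Measure X) (a : ℝ) : ℝ :=
  (⨆ l : ι, ∫ x, f l x ∂μ) - a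

/-- `γ_F = b - inf_{f∈F} E_μ[f]`. -/
def gammaF {X ι : Type*} [MeasurableSpace X] (f : ι → X → ℝ) (μ : Measure X) (b : ℝ) : ℝ :=
  b - ⨅ l : ι, ∫ x, f l x ∂μ

/-- `η̂_F(S) = sup_{f∈F} (1/m) Σ_i f(s_i) - a`. -/
def etahat {X ι : Type*} (f : ι → X → ℝ) {m : ℕ} (S : Fin m → X) (a : ℝ) : ℝ :=
  (⨆ l : ι, (m : ℝ)⁻¹ * ∑ k : Fin m, f l (S k)) - a

/-- `γ̂_F(S) = b - sup_{f∈F} (1/m) Σ_i f(s_i)`. -/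
def gammahat {X ι : Type*} (f : ι → X → ℝ) {m : ℕ} (S : Fin m → X) (b : ℝ) : ℝ :=
  b - ⨆ l : ι, (m : ℝ)⁻¹ * ∑ k : Fin m, f l (S k)

/-- `h(x) = (1+x) ln(1+x) - x`. -/
def hfun (x : ℝ) : ℝ := (1 + x) * Real.log (1 + x) - x

/-- `g(σ) = n m R̂ⁿ_m(F,S,σ) = Σ_j sup_{f∈F} Σ_i σ_{j,i} f(s_i)`. -/
def gup {X ι : Type*} (f : ι → X → ℝ) {n m : ℕ} (S : Fin m → X)
    (σ : Fin n → Fin m → Bool) : ℝ :=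
  ∑ j : Fin n, ⨆ l : ι, ∑ k : Fin m, sgnB (σ j k) * f l (S k)

/-- `g_{j,i}(σ)`: infimum over `σ'_{j,i} ∈ {-1,1}` of `g` evaluated at `σ` with its
`(j,i)` entry replaced by `σ'_{j,i}`. -/
def gji {X ι : Type*} (f : ι → X → ℝ) {n m : ℕ} (S : Fin m → X)
    (σ : Fin n → Fin m → Bool) (j : Fin n) (i : Fin m) : ℝ :=
  min (gup f S (Function.update σ j (Function.update (σ j) i true)))
      (gup f S (Function.update σ j (Function.update (σ j) i false)))

/-- `g(S) = m SD⁺(F,S) = sup_{f∈F} (Σ_i f(s_i) - m E_μ[f])`. -/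
def gSDp {X ι : Type*} [MeasurableSpace X] (f : ι → X → ℝ) (μ : Measure X)
    {m : ℕ} (S : Fin m → X) : ℝ :=
  ⨆ l : ι, (∑ k : Fin m, f l (S k) - m * ∫ x, f l x ∂μ)

/-- `g_i(S) = inf_{s'_i ∈ X} g(s_1,…,s_{i-1},s'_i,s_{i+1},…,s_m)` for `g = m SD⁺`. -/
def gSDpi {X ι : Type*} [MeasurableSpace X] (f : ι → X → ℝ) (μ : Measure X)
    {m : ℕ} (S : Fin m → X) (i : Fin m) : ℝ :=
  ⨅ s' : X, gSDp f μ (Function.update S i s')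

/-- `g(S) = m SD⁻(F,S) = sup_{f∈F} (m E_μ[f] - Σ_i f(s_i))`. -/
def gSDm {X ι : Type*} [MeasurableSpace X] (f : ι → X → ℝ) (μ : Measure X)
    {m : ℕ} (S : Fin m → X) : ℝ :=
  ⨆ l : ι, ((m : ℝ) * (∫ x, f l x ∂μ) - ∑ k : Fin m, f l (S k))

/-- `g_i(S) = inf_{s'_i ∈ X} g(s_1,…,s_{i-1},s'_i,s_{i+1},…,s_m)` for `g = m SD⁻`. -/
def gSDmi {X ι : Type*} [MeasurableSpace X] (f : ι → X → ℝ) (μ : Measure X)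
    {m : ℕ} (S : Fin m → X) (i : Fin m) : ℝ :=
  ⨅ s' : X, gSDm f μ (Function.update S i s')

/-- `g(S) = m σ̂²_F(S) = sup_{f∈F} Σ_i f(s_i)²`. -/
def gWv {X ι : Type*} (f : ι → X → ℝ) {m : ℕ} (S : Fin m → X) : ℝ :=
  ⨆ l : ι, ∑ k : Fin m, (f l (S k)) ^ 2

/-- `g_j(S) = sup_{f∈F} Σ_{i≠j} f(s_i)²`. -/
def gWvj {X ι : Type*} (f : ι → X → ℝ) {m : ℕ} (S : Fin m → X) (j : Fin m) : ℝ :=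
  ⨆ l : ι, ∑ k ∈ Finset.univ.erase j, (f l (S k)) ^ 2


/-! ### Tensorization of entropy -/

/-- Bounded measurable real functions. -/
structure BddMeas {Ω : Type*} [MeasurableSpace Ω] (h : Ω → ℝ) : Prop where
  meas : Measurable h
  bdd : ∃ C, ∀ ω, |h ω| ≤ C

namespace BddMeas

variable {Ω Ω' : Type*} [MeasurableSpace Ω] [MeasurableSpace Ω'] {g h : Ω → ℝ}

lemma integrable (hh : BddMeas h) (ρ : Measure Ω) [IsFiniteMeasure ρ] : Integrable h ρ := by
  obtain ⟨C, hC⟩ := hh.bdd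
  exact Integrable.of_bound hh.meas.aestronglyMeasurable C (Filter.Eventually.of_forall hC)

lemma const (r : ℝ) : BddMeas (fun _ : Ω => r) := ⟨measurable_const, |r|, fun _ => le_rfl⟩

lemma add (hg : BddMeas g) (hh : BddMeas h) : BddMeas (fun ω => g ω + h ω) := by
  obtain ⟨C, hC⟩ := hg.bdd
  obtain ⟨D, hD⟩ := hh.bdd
  exact ⟨hg.meas.add hh.meas, C + D, fun ω => (abs_add_le _ _).trans (add_le_add (hC ω) (hD ω))⟩

lemma mul (hg : BddMeas g) (hh : BddMeas h) : BddMeas (fun ω => g ω * h ω) := by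
  obtain ⟨C, hC⟩ := hg.bdd
  obtain ⟨D, hD⟩ := hh.bdd
  refine ⟨hg.meas.mul hh.meas, C * D, fun ω => ?_⟩
  rw [abs_mul]
  exact mul_le_mul (hC ω) (hD ω) (abs_nonneg _) ((abs_nonneg _).trans (hC ω))

lemma sub (hg : BddMeas g) (hh : BddMeas h) : BddMeas (fun ω => g ω - h ω) := by
  have := hg.add ((const (-1)).mul hh)
  simpa [sub_eq_add_neg] using this

lemma exp (hh : BddMeas h) : BddMeas (fun ω => Real.exp (h ω)) := by
  obtain ⟨C, hC⟩ := hh.bdd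
  refine ⟨Real.measurable_exp.comp hh.meas, Real.exp C, fun ω => ?_⟩
  rw [abs_of_pos (Real.exp_pos _)]
  exact Real.exp_le_exp.2 ((le_abs_self _).trans (hC ω))

lemma comp (hh : BddMeas h) {φ : Ω' → Ω} (hφ : Measurable φ) : BddMeas (fun ω => h (φ ω)) := by
  obtain ⟨C, hC⟩ := hh.bdd
  exact ⟨hh.meas.comp hφ, C, fun ω => hC _⟩

lemma integral_right {h : Ω × Ω' → ℝ} (hh : BddMeas h) (ν : Measure Ω') [IsProbabilityMeasure ν] :
    BddMeas (fun x => ∫ y, h (x, y) ∂ν) := by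
  obtain ⟨C, hC⟩ := hh.bdd
  refine ⟨hh.meas.stronglyMeasurable.integral_prod_right'.measurable, C, fun x => ?_⟩
  have := norm_integral_le_of_norm_le_const (μ := ν) (f := fun y => h (x, y)) (C := C)
    (Filter.Eventually.of_forall fun y => hC _)
  simpa using this

end BddMeas

/-- Measurable functions with values in a compact subinterval of `(0, ∞)`. -/
structure PosBddMeas {Ω : Type*} [MeasurableSpace Ω] (h : Ω → ℝ) : Prop extends BddMeas h where
  lower : ∃ ε > 0, ∀ ω, ε ≤ h ω

namespace PosBddMeas

variable {Ω Ω' : Type*} [MeasurableSpace Ω] [MeasurableSpace Ω'] {h : Ω → ℝ}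

lemma pos (hh : PosBddMeas h) (ω : Ω) : 0 < h ω := by
  obtain ⟨ε, hε, hl⟩ := hh.lower
  exact hε.trans_le (hl ω)

lemma log (hh : PosBddMeas h) : BddMeas (fun ω => Real.log (h ω)) := by
  obtain ⟨C, hC⟩ := hh.bdd
  obtain ⟨ε, hε, hl⟩ := hh.lower
  refine ⟨Real.measurable_log.comp hh.meas, max |Real.log ε| |Real.log C|, fun ω => ?_⟩
  exact abs_le_max_abs_abs (Real.log_le_log hε (hl ω))
    (Real.log_le_log (hh.pos ω) ((le_abs_self _).trans (hC ω)))

lemma exp {h : Ω → ℝ} (hh : BddMeas h) : PosBddMeas (fun ω => Real.exp (h ω)) := by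
  refine ⟨hh.exp, ?_⟩
  obtain ⟨C, hC⟩ := hh.bdd
  exact ⟨Real.exp (-C), Real.exp_pos _, fun ω => Real.exp_le_exp.2 (abs_le.1 (hC ω)).1⟩

lemma comp (hh : PosBddMeas h) {φ : Ω' → Ω} (hφ : Measurable φ) :
    PosBddMeas (fun ω => h (φ ω)) := by
  obtain ⟨ε, hε, hl⟩ := hh.lower
  exact ⟨hh.toBddMeas.comp hφ, ε, hε, fun ω => hl _⟩

lemma integral_lower (hh : PosBddMeas h) {ε : ℝ} (hl : ∀ ω, ε ≤ h ω) (ν : Measure Ω)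
    [IsProbabilityMeasure ν] : ε ≤ ∫ y, h y ∂ν := by
  have := integral_mono (integrable_const ε) (hh.toBddMeas.integrable ν) hl
  simpa using this

lemma integral_pos (hh : PosBddMeas h) (ν : Measure Ω) [IsProbabilityMeasure ν] :
    0 < ∫ y, h y ∂ν := by
  obtain ⟨ε, hε, hl⟩ := hh.lower
  exact hε.trans_le (hh.integral_lower hl ν)

lemma integral_right {h : Ω × Ω' → ℝ} (hh : PosBddMeas h) (ν : Measure Ω')
    [IsProbabilityMeasure ν] : PosBddMeas (fun x => ∫ y, h (x, y) ∂ν) := by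
  obtain ⟨ε, hε, hl⟩ := hh.lower
  exact ⟨hh.toBddMeas.integral_right ν, ε, hε, fun x =>
    (hh.comp (measurable_const.prodMk measurable_id : Measurable fun y => (x, y))).integral_lower
      (fun y => hl _) ν⟩

end PosBddMeas

/-- The convexity inequality `t log (t / v) - t + v ≥ 0`. -/
lemma sub_le_mul_log_sub {t v : ℝ} (ht : 0 < t) (hv : 0 < v) :
    t - v ≤ t * (Real.log t - Real.log v) := by
  have h := Real.log_le_sub_one_of_pos (div_pos hv ht)
  rw [Real.log_div hv.ne' ht.ne'] at h
  have h2 := mul_le_mul_of_nonneg_left h ht.le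
  have h3 : t * (v / t - 1) = v - t := by field_simp
  nlinarith

/-- The integrand in the variational bound on entropy: for a probability measure
and a positive constant `U`, `∫ entGap T U ≥ ∫ T log T - (∫ T) log (∫ T)`, with equality for
`U = ∫ T`. -/
def entGap {Ω : Type*} (T U : Ω → ℝ) (ω : Ω) : ℝ :=
  T ω * (Real.log (T ω) - Real.log (U ω)) - T ω + U ω

lemma entGap_bddMeas {Ω : Type*} [MeasurableSpace Ω] {T U : Ω → ℝ} (hT : PosBddMeas T)
    (hU : PosBddMeas U) : BddMeas (entGap T U) :=
  ((hT.toBddMeas.mul (hT.log.sub hU.log)).sub hT.toBddMeas).add hU.toBddMeas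

/-- The entropy of a marginal `T'(x) = ∫ T(x, y) dν(y)` is controlled by the variational bound in
the first variable for `T` itself. The comparison point of the pointwise convexity inequality is
`u(y) T'(x) / ∫ T`. -/
lemma ent_marginal_le {X Y : Type*} [MeasurableSpace X] [MeasurableSpace Y]
    (μ : Measure X) [IsProbabilityMeasure μ] (ν : Measure Y) [IsProbabilityMeasure ν]
    {T : X × Y → ℝ} (hT : PosBddMeas T) {u : Y → ℝ} (hu : PosBddMeas u) :
    (∫ x, (∫ y, T (x, y) ∂ν) * Real.log (∫ y, T (x, y) ∂ν) ∂μ)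
        - (∫ p, T p ∂(μ.prod ν)) * Real.log (∫ p, T p ∂(μ.prod ν))
      ≤ ∫ p, entGap T (fun p => u p.2) p ∂(μ.prod ν) := by
  set T' : X → ℝ := fun x => ∫ y, T (x, y) ∂ν with hT'def
  have hT' : PosBddMeas T' := hT.integral_right ν
  set e : ℝ := ∫ p, T p ∂(μ.prod ν) with he
  have he0 : 0 < e := hT.integral_pos _
  have hu2 : PosBddMeas (fun p : X × Y => u p.2) := hu.comp measurable_snd
  have hT2 : PosBddMeas (fun p : X × Y => T' p.1) := hT'.comp measurable_fst
  have hpt : ∀ p : X × Y, T p * Real.log (T' p.1) - T p * Real.log e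
      + u p.2 - T' p.1 * u p.2 * e⁻¹ ≤ entGap T (fun p => u p.2) p := by
    intro p
    have h1 := hT2.pos p
    have h2 := hu2.pos p
    have h := sub_le_mul_log_sub (hT.pos p) (mul_pos (mul_pos h1 h2) (inv_pos.2 he0))
    rw [Real.log_mul (mul_pos h1 h2).ne' (inv_pos.2 he0).ne', Real.log_mul h1.ne' h2.ne',
      Real.log_inv] at h
    unfold entGap
    linarith
  have hb1 : BddMeas (fun p => T p * Real.log (T' p.1)) := hT.toBddMeas.mul hT2.log
  have hb2 : BddMeas (fun p => T p * Real.log e) := hT.toBddMeas.mul (.const _)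
  have hb3 : BddMeas (fun p : X × Y => T' p.1 * u p.2 * e⁻¹) :=
    (hT2.toBddMeas.mul hu2.toBddMeas).mul (.const _)
  have hmono := integral_mono (μ := μ.prod ν)
    ((((hb1.sub hb2).add hu2.toBddMeas).sub hb3).integrable _)
    ((entGap_bddMeas hT hu2).integrable _) hpt
  have i1 : ∫ p, T p * Real.log (T' p.1) ∂(μ.prod ν) = ∫ x, T' x * Real.log (T' x) ∂μ := by
    rw [integral_prod _ (hb1.integrable _)]
    simp only [integral_mul_const, hT'def]
  have i2 : ∫ p, T p * Real.log e ∂(μ.prod ν) = e * Real.log e := by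
    rw [integral_mul_const]
  have ie : ∫ x, T' x ∂μ = e := by
    rw [he, integral_prod _ (hT.toBddMeas.integrable _)]
  have i3 : ∫ p : X × Y, T' p.1 * u p.2 * e⁻¹ ∂(μ.prod ν) = ∫ y, u y ∂ν := by
    rw [integral_mul_const, integral_prod_mul, ie]
    field_simp
  have i4 : ∫ p : X × Y, u p.2 ∂(μ.prod ν) = ∫ y, u y ∂ν := by
    rw [integral_prod _ (hu2.toBddMeas.integrable _)]
    simp
  rw [integral_sub (((hb1.sub hb2).add hu2.toBddMeas).integrable _) (hb3.integrable _),
    integral_add ((hb1.sub hb2).integrable _) (hu2.toBddMeas.integrable _),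
    integral_sub (hb1.integrable _) (hb2.integrable _), i1, i2, i3, i4] at hmono
  linarith

lemma measurable_fin_cons {X : Type*} [MeasurableSpace X] (m : ℕ) :
    Measurable (fun p : X × (Fin m → X) => (Fin.cons p.1 p.2 : Fin (m + 1) → X)) := by
  refine measurable_pi_lambda _ fun i => ?_
  refine Fin.cases ?_ (fun j => ?_) i
  · simpa using measurable_fst
  · simpa [Function.comp_def] using (measurable_pi_apply j).comp measurable_snd

lemma integral_pi_succ {X : Type*} [MeasurableSpace X] (μ : Measure X) [IsProbabilityMeasure μ]
    (m : ℕ) (h : (Fin (m + 1) → X) → ℝ) :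
    ∫ S, h S ∂(Measure.pi fun _ : Fin (m + 1) => μ)
      = ∫ p : X × (Fin m → X), h (Fin.cons p.1 p.2)
          ∂(μ.prod (Measure.pi fun _ : Fin m => μ)) := by
  rw [← ((measurePreserving_piFinSuccAbove (fun _ : Fin (m + 1) => μ) 0).symm).integral_comp']
  simp [MeasurableEquiv.piFinSuccAbove_symm_apply, Fin.insertNthEquiv]

/-- Tensorization of entropy combined with its variational formula: each `U i` is a comparison
function that does not depend on the `i`-th coordinate. -/
lemma ent_tensor {X : Type*} [MeasurableSpace X] (μ : Measure X) [IsProbabilityMeasure μ]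
    (m : ℕ) (T : (Fin m → X) → ℝ) (hT : PosBddMeas T) (U : Fin m → (Fin m → X) → ℝ)
    (hU : ∀ i, PosBddMeas (U i)) (hUi : ∀ i S x, U i (Function.update S i x) = U i S) :
    (∫ S, T S * Real.log (T S) ∂(Measure.pi fun _ : Fin m => μ))
        - (∫ S, T S ∂(Measure.pi fun _ : Fin m => μ))
          * Real.log (∫ S, T S ∂(Measure.pi fun _ : Fin m => μ))
      ≤ ∑ i, ∫ S, entGap T (U i) S ∂(Measure.pi fun _ : Fin m => μ) := by
  induction m with
  | zero =>
    rw [Measure.pi_of_empty]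
    simp
  | succ m ih =>
    obtain ⟨x₀⟩ : Nonempty X := by
      by_contra hne
      rw [not_nonempty_iff] at hne
      have h1 : μ Set.univ = 1 := measure_univ
      simp [Set.univ_eq_empty_iff.2 hne] at h1
    have hc := measurable_fin_cons (X := X) m
    set ν := Measure.pi fun _ : Fin m => μ with hν
    have hT2 : PosBddMeas (fun p : X × (Fin m → X) => T (Fin.cons p.1 p.2)) := hT.comp hc
    have hU2 : ∀ i, PosBddMeas (fun p : X × (Fin m → X) => U i (Fin.cons p.1 p.2)) :=
      fun i => (hU i).comp hc
    have hs : ∀ x : X, Measurable (fun y : Fin m → X => (x, y)) := fun x =>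
      measurable_const.prodMk measurable_id
    -- the head coordinate, through the marginal of `T`
    have hu : PosBddMeas (fun y : Fin m → X => U 0 (Fin.cons x₀ y)) := (hU2 0).comp (hs x₀)
    have hu0 : ∀ x y, U 0 (Fin.cons x y) = U 0 (Fin.cons x₀ y) := by
      intro x y
      rw [← hUi 0 (Fin.cons x₀ y) x, Fin.update_cons_zero]
    have h0 := ent_marginal_le μ ν hT2 hu
    have hg0 : ∫ p : X × (Fin m → X), entGap (fun p : X × (Fin m → X) => T (Fin.cons p.1 p.2))
        (fun p => U 0 (Fin.cons x₀ p.2)) p ∂(μ.prod ν)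
        = ∫ p : X × (Fin m → X), entGap T (U 0) (Fin.cons p.1 p.2) ∂(μ.prod ν) := by
      refine integral_congr_ae (Filter.Eventually.of_forall fun p => ?_)
      simp only [entGap, hu0 p.1 p.2]
    -- the remaining coordinates, with the head coordinate frozen
    have htail : ∀ x : X, (∫ y, T (Fin.cons x y) * Real.log (T (Fin.cons x y)) ∂ν)
        - (∫ y, T (Fin.cons x y) ∂ν) * Real.log (∫ y, T (Fin.cons x y) ∂ν)
        ≤ ∑ i : Fin m, ∫ y, entGap T (U i.succ) (Fin.cons x y) ∂ν := by
      intro x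
      refine ih (fun y => T (Fin.cons x y)) (hT2.comp (hs x))
        (fun i y => U i.succ (Fin.cons x y)) (fun i => (hU2 i.succ).comp (hs x)) ?_
      intro i S x'
      change U i.succ (Fin.cons x (Function.update S i x')) = U i.succ (Fin.cons x S)
      rw [Fin.cons_update, hUi]
    have hA : BddMeas (fun p : X × (Fin m → X) =>
        T (Fin.cons p.1 p.2) * Real.log (T (Fin.cons p.1 p.2))) := hT2.toBddMeas.mul hT2.log
    have hB := hT2.integral_right ν
    have hG : ∀ i : Fin (m + 1), BddMeas (fun p : X × (Fin m → X) =>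
        entGap T (U i) (Fin.cons p.1 p.2)) := fun i => (entGap_bddMeas hT (hU i)).comp hc
    have hint := integral_mono (μ := μ)
      (((hA.integral_right ν).sub (hB.toBddMeas.mul hB.log)).integrable μ)
      (integrable_finsetSum _ fun i _ => ((hG (Fin.succ i)).integral_right ν).integrable μ) htail
    rw [integral_sub ((hA.integral_right ν).integrable μ)
      ((hB.toBddMeas.mul hB.log).integrable μ),
      integral_finsetSum _ fun i _ => ((hG (Fin.succ i)).integral_right ν).integrable μ,
      ← integral_prod _ (hA.integrable (μ.prod ν))] at hint
    have hsum : ∀ i : Fin m, ∫ x, ∫ y, entGap T (U i.succ) (Fin.cons x y) ∂ν ∂μ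
        = ∫ p : X × (Fin m → X), entGap T (U i.succ) (Fin.cons p.1 p.2) ∂(μ.prod ν) := fun i =>
      (integral_prod _ ((hG i.succ).integrable (μ.prod ν))).symm
    rw [Finset.sum_congr rfl fun i _ => hsum i] at hint
    rw [hg0] at h0
    simp only [integral_pi_succ, Fin.sum_univ_succ, ← hν]
    linarith

/-! ### Lower tail of self-bounding functions -/

/-- By convexity of `exp`, `φ(l d) ≤ d φ(l)` for `d ∈ [0, 1]`, where `φ(x) = exp x - 1 - x`. -/
lemma exp_sub_le_of_mem_unit {l d : ℝ} (h0 : 0 ≤ d) (h1 : d ≤ 1) :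
    Real.exp (l * d) - 1 - l * d ≤ d * (Real.exp l - 1 - l) := by
  have h := convexOn_exp.2 (Set.mem_univ (0 : ℝ)) (Set.mem_univ l) (sub_nonneg.2 h1) h0 (by ring)
  simp only [smul_eq_mul, mul_zero, zero_add, Real.exp_zero, mul_one] at h
  rw [mul_comm l d]
  linarith

/-- A function `Z` of `m` independent coordinates is self-bounding when there are functions `V i`,
with `V i` not depending on the `i`-th coordinate, such that `0 ≤ Z - V i ≤ 1` and
`∑ i, (Z - V i) ≤ Z`. -/
structure SelfBounding {X : Type*} [MeasurableSpace X] {m : ℕ} (Z : (Fin m → X) → ℝ)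
    (V : Fin m → (Fin m → X) → ℝ) : Prop where
  bdd : BddMeas Z
  bdd_left : ∀ i, BddMeas (V i)
  indep : ∀ i S x, V i (Function.update S i x) = V i S
  le : ∀ i S, V i S ≤ Z S
  le_add_one : ∀ i S, Z S ≤ V i S + 1
  sum_le : ∀ S, ∑ i, (Z S - V i S) ≤ Z S

/-- The differential inequality satisfied by `F(l) = E exp (-l Z)`, for `-F'(l) = E Z exp (-l Z)`. -/
lemma SelfBounding.mgf_ineq {X : Type*} [MeasurableSpace X] (μ : Measure X)
    [IsProbabilityMeasure μ] {m : ℕ} {Z : (Fin m → X) → ℝ} {V : Fin m → (Fin m → X) → ℝ}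
    (h : SelfBounding Z V) (l : ℝ) :
    -((∫ S, Real.exp (-l * Z S) ∂(Measure.pi fun _ : Fin m => μ))
        * Real.log (∫ S, Real.exp (-l * Z S) ∂(Measure.pi fun _ : Fin m => μ)))
      ≤ (Real.exp l - 1) * ∫ S, Z S * Real.exp (-l * Z S) ∂(Measure.pi fun _ : Fin m => μ) := by
  set P := Measure.pi fun _ : Fin m => μ
  have hT : PosBddMeas (fun S => Real.exp (-l * Z S)) := .exp ((BddMeas.const _).mul h.bdd)
  have hU : ∀ i, PosBddMeas (fun S => Real.exp (-l * V i S)) := fun i =>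
    .exp ((BddMeas.const _).mul (h.bdd_left i))
  have hZT := h.bdd.mul hT.toBddMeas
  have key := ent_tensor μ m _ hT (fun i S => Real.exp (-l * V i S)) hU
    (fun i S x => by simp only [h.indep])
  have hgap : ∀ S, ∑ i, entGap (fun S => Real.exp (-l * Z S)) (fun S => Real.exp (-l * V i S)) S
      ≤ (Real.exp l - 1 - l) * (Z S * Real.exp (-l * Z S)) := by
    intro S
    have hphi : 0 ≤ Real.exp l - 1 - l := by linarith [Real.add_one_le_exp l]
    have hterm : ∀ i, entGap (fun S => Real.exp (-l * Z S)) (fun S => Real.exp (-l * V i S)) S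
        ≤ (Real.exp l - 1 - l) * Real.exp (-l * Z S) * (Z S - V i S) := by
      intro i
      have hd := exp_sub_le_of_mem_unit (l := l) (sub_nonneg.2 (h.le i S))
        (by linarith [h.le_add_one i S] : Z S - V i S ≤ 1)
      have hE : Real.exp (-l * V i S) = Real.exp (-l * Z S) * Real.exp (l * (Z S - V i S)) := by
        rw [← Real.exp_add]; congr 1; ring
      have := mul_le_mul_of_nonneg_left hd (Real.exp_pos (-l * Z S)).le
      simp only [entGap, Real.log_exp]
      rw [hE]
      linarith
    calc _ ≤ ∑ i, (Real.exp l - 1 - l) * Real.exp (-l * Z S) * (Z S - V i S) :=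
          Finset.sum_le_sum fun i _ => hterm i
      _ = (Real.exp l - 1 - l) * Real.exp (-l * Z S) * ∑ i, (Z S - V i S) := by
          rw [Finset.mul_sum]
      _ ≤ (Real.exp l - 1 - l) * Real.exp (-l * Z S) * Z S :=
          mul_le_mul_of_nonneg_left (h.sum_le S) (mul_nonneg hphi (Real.exp_pos _).le)
      _ = _ := by ring
  have hG := fun i => (entGap_bddMeas hT (hU i)).integrable P
  rw [← integral_finsetSum _ fun i _ => hG i] at key
  have hint := integral_mono (integrable_finsetSum _ fun i _ => hG i)
    ((((BddMeas.const (Real.exp l - 1 - l)).mul hZT)).integrable P) hgap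
  rw [integral_const_mul] at hint
  have hlog : ∫ S, Real.exp (-l * Z S) * Real.log (Real.exp (-l * Z S)) ∂P
      = -l * ∫ S, Z S * Real.exp (-l * Z S) ∂P := by
    rw [← integral_const_mul]
    refine integral_congr_ae (Filter.Eventually.of_forall fun S => ?_)
    simp only [Real.log_exp]
    ring
  rw [hlog] at key
  linarith

/-- The Herbst argument: the differential inequality says that `log F(l) / (1 - exp (-l))` is
nonincreasing on `(0, ∞)`, and its limit at `0` is `-E Z`. -/
lemma SelfBounding.cgf_le {X : Type*} [MeasurableSpace X] (μ : Measure X)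
    [IsProbabilityMeasure μ] {m : ℕ} {Z : (Fin m → X) → ℝ} {V : Fin m → (Fin m → X) → ℝ}
    (h : SelfBounding Z V) {l : ℝ} (hl : 0 < l) :
    ProbabilityTheory.cgf Z (Measure.pi fun _ : Fin m => μ) (-l)
      ≤ -(1 - Real.exp (-l)) * ∫ S, Z S ∂(Measure.pi fun _ : Fin m => μ) := by
  set P := Measure.pi fun _ : Fin m => μ
  have hset : ProbabilityTheory.integrableExpSet Z P = Set.univ :=
    Set.eq_univ_of_forall fun t => ((BddMeas.const t).mul h.bdd).exp.integrable P
  have hint : ∀ t : ℝ, t ∈ interior (ProbabilityTheory.integrableExpSet Z P) := by simp [hset]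
  have hFpos : ∀ t : ℝ, 0 < ProbabilityTheory.mgf Z P t := fun t =>
    (PosBddMeas.exp ((BddMeas.const t).mul h.bdd)).integral_pos P
  set D : ℝ → ℝ := fun x => ∫ S, Z S * Real.exp (-x * Z S) ∂P with hD
  set K : ℝ → ℝ := fun x => ProbabilityTheory.cgf Z P (-x) with hK
  have hKd : ∀ x, HasDerivAt K (-D x / ProbabilityTheory.mgf Z P (-x)) x := by
    intro x
    have h1 := (ProbabilityTheory.hasDerivAt_mgf (hint (-x))).comp x (hasDerivAt_neg x)
    have h2 := h1.log (hFpos _).ne'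
    simpa [hK, hD, ProbabilityTheory.cgf, Function.comp_def] using h2
  have hEd : ∀ x : ℝ, HasDerivAt (fun x => 1 - Real.exp (-x)) (Real.exp (-x)) x := by
    intro x
    simpa using ((hasDerivAt_neg x).exp).const_sub 1
  have hEpos : ∀ x : ℝ, 0 < x → 0 < 1 - Real.exp (-x) := by
    intro x hx
    have : Real.exp (-x) < 1 := Real.exp_lt_one_iff.2 (by linarith)
    linarith
  have hQd := fun x (hx : 0 < x) => (hKd x).div (hEd x) (hEpos x hx).ne'
  have hanti : AntitoneOn (fun x => K x / (1 - Real.exp (-x))) (Set.Ioi 0) := by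
    refine antitoneOn_of_deriv_nonpos (convex_Ioi 0)
      (fun x hx => (hQd x hx).continuousAt.continuousWithinAt) ?_ ?_
    · rw [interior_Ioi]
      exact fun x hx => (hQd x hx).differentiableAt.differentiableWithinAt
    · rw [interior_Ioi]
      intro x hx
      have hder := (hQd x hx).deriv
      simp only [Pi.div_def] at hder
      rw [hder]
      refine div_nonpos_of_nonpos_of_nonneg ?_ (sq_nonneg _)
      have hF := hFpos (-x)
      have hm := h.mgf_ineq μ x
      change -(ProbabilityTheory.mgf Z P (-x) * K x) ≤ (Real.exp x - 1) * D x at hm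
      have he : Real.exp (-x) * Real.exp x = 1 := by rw [← Real.exp_add]; simp
      have hm2 := mul_le_mul_of_nonneg_left hm (Real.exp_pos (-x)).le
      have e2 : Real.exp (-x) * ((Real.exp x - 1) * D x) = (1 - Real.exp (-x)) * D x := by
        linear_combination D x * he
      rw [e2] at hm2
      rw [div_mul_eq_mul_div, sub_nonpos, div_le_iff₀ hF]
      linarith
  have hK0 : K 0 = 0 := by simp [hK]
  have hD0 : -D 0 / ProbabilityTheory.mgf Z P (-0) = -∫ S, Z S ∂P := by
    simp [hD]
  have hlim : Filter.Tendsto (fun x => K x / (1 - Real.exp (-x))) (nhdsWithin 0 (Set.Ioi 0))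
      (nhds (-∫ S, Z S ∂P)) := by
    have t1 := (hKd 0).tendsto_slope_zero_right
    have t2 := (hEd 0).tendsto_slope_zero_right
    rw [hD0] at t1
    have t3 := t1.div t2 (by simp)
    simp only [zero_add, hK0, sub_zero, smul_eq_mul, neg_zero, Real.exp_zero, sub_self,
      div_one] at t3
    refine t3.congr' ?_
    filter_upwards [self_mem_nhdsWithin] with x hx
    have hx' : x ≠ 0 := (show (0 : ℝ) < x from hx).ne'
    simp only [Pi.div_apply]
    exact mul_div_mul_left _ _ (inv_ne_zero hx')
  have hle : K l / (1 - Real.exp (-l)) ≤ -∫ S, Z S ∂P := by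
    refine ge_of_tendsto hlim ?_
    filter_upwards [Ioo_mem_nhdsGT hl] with x hx
    exact hanti hx.1 hl hx.2.le
  rw [div_le_iff₀ (hEpos l hl)] at hle
  change K l ≤ _
  linarith

lemma exp_neg_le_quadratic {l : ℝ} (hl : 0 ≤ l) : Real.exp (-l) ≤ 1 - l + l ^ 2 / 2 := by
  have h := Real.quadratic_le_exp_of_nonneg hl
  have hpos : 0 < 1 + l + l ^ 2 / 2 := by positivity
  rw [Real.exp_neg]
  calc (Real.exp l)⁻¹ ≤ (1 + l + l ^ 2 / 2)⁻¹ := inv_anti₀ hpos h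
    _ ≤ 1 - l + l ^ 2 / 2 := by
      rw [inv_le_iff_one_le_mul₀ hpos]
      nlinarith [sq_nonneg (l ^ 2)]

/-- The sub-Gaussian lower tail `P(Z ≤ E Z - t) ≤ exp (-t² / (2 E Z))`, from the Chernoff bound
at `l = t / E Z`. -/
lemma SelfBounding.lower_tail {X : Type*} [MeasurableSpace X] (μ : Measure X)
    [IsProbabilityMeasure μ] {m : ℕ} {Z : (Fin m → X) → ℝ} {V : Fin m → (Fin m → X) → ℝ}
    (h : SelfBounding Z V) {E t : ℝ} (hE : E = ∫ S, Z S ∂(Measure.pi fun _ : Fin m => μ))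
    (hE0 : 0 < E) (ht : 0 < t) :
    (Measure.pi fun _ : Fin m => μ).real {S | Z S ≤ E - t} ≤ Real.exp (-(t ^ 2 / (2 * E))) := by
  set P := Measure.pi fun _ : Fin m => μ
  have hl : 0 < t / E := div_pos ht hE0
  have hcher := ProbabilityTheory.measure_le_le_exp_cgf (μ := P) (X := Z) (t := -(t / E)) (E - t)
    (by linarith) (((BddMeas.const _).mul h.bdd).exp.integrable P)
  refine hcher.trans (Real.exp_le_exp.2 ?_)
  have h1 := h.cgf_le μ hl
  rw [← hE] at h1
  have h2 := mul_le_mul_of_nonneg_right (exp_neg_le_quadratic hl.le) hE0.le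
  have h3 : -(-(t / E)) * (E - t) - E + (1 - t / E + (t / E) ^ 2 / 2) * E
      = -(t ^ 2 / (2 * E)) := by
    field_simp
    ring
  linarith

/-! ### Rademacher averages are self-bounding -/

/-- The supremum `sup_f ∑_{k ∈ J} σ_k f(s_k)` of the signed sums over the indices in `J`. -/
def radSup {X ι : Type*} (f : ι → X → ℝ) {m : ℕ} (J : Finset (Fin m)) (S : Fin m → X)
    (σ : Fin m → Bool) : ℝ :=
  ⨆ l : ι, ∑ k ∈ J, sgnB (σ k) * f l (S k)

/-- The unnormalised Rademacher average `E_σ sup_f ∑_{k ∈ J} σ_k f(s_k)`. -/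
def radAvg {X ι : Type*} (f : ι → X → ℝ) {m : ℕ} (J : Finset (Fin m)) (S : Fin m → X) : ℝ :=
  (Fintype.card (Fin m → Bool) : ℝ)⁻¹ * ∑ σ : Fin m → Bool, radSup f J S σ

lemma era_one_eq {X ι : Type*} (f : ι → X → ℝ) (m : ℕ) (S : Fin m → X) :
    era f 1 m S = (m : ℝ)⁻¹ * radAvg f Finset.univ S := by
  unfold era radMeasure mcera radAvg
  rw [PMF.integral_eq_sum, Finset.mul_sum, Finset.mul_sum]
  refine Fintype.sum_equiv (Equiv.funUnique (Fin 1) (Fin m → Bool)) _ _ fun σ => ?_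
  simp only [← Real.mul_iSup_of_nonneg (by positivity : 0 ≤ (m : ℝ)⁻¹)]
  simp [radSup, PMF.uniformOfFintype_apply]
  ring

lemma sgnB_true : sgnB true = 1 := by simp [sgnB]

lemma sgnB_false : sgnB false = -1 := by simp [sgnB]

lemma abs_sgnB (x : Bool) : |sgnB x| = 1 := by cases x <;> simp [sgnB]

lemma sgnB_not (x : Bool) : sgnB (!x) = -sgnB x := by cases x <;> simp [sgnB]

section RadSup

variable {X ι : Type*} {f : ι → X → ℝ} {a b : ℝ} {m : ℕ}

lemma abs_radSum_le (hrange : ∀ l x, f l x ∈ Set.Icc a b) (J : Finset (Fin m)) (S : Fin m → X)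
    (σ : Fin m → Bool) (l : ι) :
    |∑ k ∈ J, sgnB (σ k) * f l (S k)| ≤ m * max |a| |b| := by
  calc _ ≤ ∑ k ∈ J, |sgnB (σ k) * f l (S k)| := Finset.abs_sum_le_sum_abs _ _
    _ ≤ ∑ k ∈ J, max |a| |b| := Finset.sum_le_sum fun k _ => by
        rw [abs_mul, abs_sgnB, one_mul]
        exact abs_le_max_abs_abs (hrange _ _).1 (hrange _ _).2
    _ ≤ m * max |a| |b| := by
        rw [Finset.sum_const, nsmul_eq_mul]
        have : J.card ≤ m := by simpa using Finset.card_le_univ J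
        gcongr

lemma bddAbove_radSum (hrange : ∀ l x, f l x ∈ Set.Icc a b) (J : Finset (Fin m))
    (S : Fin m → X) (σ : Fin m → Bool) :
    BddAbove (Set.range fun l => ∑ k ∈ J, sgnB (σ k) * f l (S k)) :=
  ⟨m * max |a| |b|, by
    rintro _ ⟨l, rfl⟩
    exact (le_abs_self _).trans (abs_radSum_le hrange J S σ l)⟩

lemma le_radSup (hrange : ∀ l x, f l x ∈ Set.Icc a b) (J : Finset (Fin m))
    (S : Fin m → X) (σ : Fin m → Bool) (l : ι) :
    ∑ k ∈ J, sgnB (σ k) * f l (S k) ≤ radSup f J S σ :=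
  le_ciSup (bddAbove_radSum hrange J S σ) l

lemma abs_radSup_le [Nonempty ι] (hrange : ∀ l x, f l x ∈ Set.Icc a b) (J : Finset (Fin m))
    (S : Fin m → X) (σ : Fin m → Bool) : |radSup f J S σ| ≤ m * max |a| |b| := by
  obtain ⟨l⟩ := ‹Nonempty ι›
  rw [abs_le]
  exact ⟨(abs_le.1 (abs_radSum_le hrange J S σ l)).1.trans (le_radSup hrange J S σ l),
    ciSup_le fun l => (le_abs_self _).trans (abs_radSum_le hrange J S σ l)⟩

lemma radAvg_bddMeas [MeasurableSpace X] [Countable ι] [Nonempty ι]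
    (hmeas : ∀ l, Measurable (f l)) (hrange : ∀ l x, f l x ∈ Set.Icc a b) (J : Finset (Fin m)) :
    BddMeas (fun S : Fin m → X => radAvg f J S) := by
  have h1 : ∀ σ, BddMeas (fun S : Fin m → X => radSup f J S σ) := fun σ =>
    ⟨Measurable.iSup fun l => Finset.measurable_sum _ fun k _ =>
      ((hmeas l).comp (measurable_pi_apply k)).const_mul _, _, fun S => abs_radSup_le hrange J S σ⟩
  have h2 : ∀ s : Finset (Fin m → Bool),
      BddMeas (fun S : Fin m → X => ∑ σ ∈ s, radSup f J S σ) := by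
    classical
    intro s
    induction s using Finset.induction_on with
    | empty => simpa using BddMeas.const 0
    | insert σ s hσ ih => simpa only [Finset.sum_insert hσ] using (h1 σ).add ih
  exact (BddMeas.const _).mul (h2 _)

/-- Flip the `i`-th sign. -/
def flipAt (i : Fin m) (σ : Fin m → Bool) : Fin m → Bool := Function.update σ i (!σ i)

lemma flipAt_involutive (i : Fin m) : Function.Involutive (flipAt i) := fun σ => by
  simp [flipAt]

lemma sum_radSup_flip (f : ι → X → ℝ) (S : Fin m → X) (i : Fin m) :
    ∑ σ, (radSup f Finset.univ S σ + radSup f Finset.univ S (flipAt i σ))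
      = 2 * ∑ σ, radSup f Finset.univ S σ := by
  rw [Finset.sum_add_distrib, two_mul]
  congr 1
  exact Fintype.sum_equiv (flipAt_involutive i).toPerm _ _ fun σ => rfl

lemma radSum_split (f : ι → X → ℝ) (S : Fin m → X) (i : Fin m) (σ : Fin m → Bool) (l : ι) :
    ∑ k, sgnB (σ k) * f l (S k)
      = ∑ k ∈ Finset.univ.erase i, sgnB (σ k) * f l (S k) + sgnB (σ i) * f l (S i) :=
  (Finset.sum_erase_add _ _ (Finset.mem_univ i)).symm

lemma radSum_split_flip (f : ι → X → ℝ) (S : Fin m → X) (i : Fin m) (σ : Fin m → Bool) (l : ι) :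
    ∑ k, sgnB (flipAt i σ k) * f l (S k)
      = ∑ k ∈ Finset.univ.erase i, sgnB (σ k) * f l (S k) - sgnB (σ i) * f l (S i) := by
  rw [radSum_split f S i]
  have h1 : ∑ k ∈ Finset.univ.erase i, sgnB (flipAt i σ k) * f l (S k)
      = ∑ k ∈ Finset.univ.erase i, sgnB (σ k) * f l (S k) :=
    Finset.sum_congr rfl fun k hk => by
      rw [flipAt, Function.update_of_ne (Finset.ne_of_mem_erase hk)]
  rw [h1, flipAt, Function.update_self, sgnB_not]
  ring

/-- Jensen's inequality for the average over the `i`-th sign. -/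
lemma two_mul_radSup_erase_le [Nonempty ι] (hrange : ∀ l x, f l x ∈ Set.Icc a b)
    (S : Fin m → X) (i : Fin m) (σ : Fin m → Bool) :
    2 * radSup f (Finset.univ.erase i) S σ
      ≤ radSup f Finset.univ S σ + radSup f Finset.univ S (flipAt i σ) := by
  conv_lhs => unfold radSup
  rw [Real.mul_iSup_of_nonneg (by norm_num)]
  refine ciSup_le fun l => ?_
  have h1 := le_radSup hrange Finset.univ S σ l
  have h2 := le_radSup hrange Finset.univ S (flipAt i σ) l
  rw [radSum_split f S i] at h1
  rw [radSum_split_flip] at h2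
  linarith

/-- Of the two values of the `i`-th sign, one adds at most `b` and the other at most `-a`. -/
lemma radSup_add_flip_le [Nonempty ι] (hrange : ∀ l x, f l x ∈ Set.Icc a b)
    (S : Fin m → X) (i : Fin m) (σ : Fin m → Bool) :
    radSup f Finset.univ S σ + radSup f Finset.univ S (flipAt i σ)
      ≤ 2 * radSup f (Finset.univ.erase i) S σ + (b - a) := by
  have hE := le_radSup hrange (Finset.univ.erase i) S σ
  cases hσ : σ i
  · have h1 : radSup f Finset.univ S σ ≤ radSup f (Finset.univ.erase i) S σ - a := by
      refine ciSup_le fun l => ?_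
      rw [radSum_split f S i, hσ]
      have := (hrange l (S i)).1
      have := hE l
      rw [sgnB_false]
      linarith
    have h2 : radSup f Finset.univ S (flipAt i σ) ≤ radSup f (Finset.univ.erase i) S σ + b := by
      refine ciSup_le fun l => ?_
      rw [radSum_split_flip, hσ]
      have := (hrange l (S i)).2
      have := hE l
      rw [sgnB_false]
      linarith
    linarith
  · have h1 : radSup f Finset.univ S σ ≤ radSup f (Finset.univ.erase i) S σ + b := by
      refine ciSup_le fun l => ?_
      rw [radSum_split f S i, hσ]
      have := (hrange l (S i)).2
      have := hE l
      rw [sgnB_true]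
      linarith
    have h2 : radSup f Finset.univ S (flipAt i σ) ≤ radSup f (Finset.univ.erase i) S σ - a := by
      refine ciSup_le fun l => ?_
      rw [radSum_split_flip, hσ]
      have := (hrange l (S i)).1
      have := hE l
      rw [sgnB_true]
      linarith
    linarith

lemma sum_radSup_sub_erase_le [Nonempty ι] (hm : 0 < m) (hrange : ∀ l x, f l x ∈ Set.Icc a b)
    (S : Fin m → X) (σ : Fin m → Bool) :
    ∑ i, (radSup f Finset.univ S σ - radSup f (Finset.univ.erase i) S σ)
      ≤ radSup f Finset.univ S σ := by
  -- equivalently `(m - 1) W ≤ ∑ i, W i`, which holds because the `m` leave-one-out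
  -- versions of a signed sum add up to `m - 1` times that sum
  have h1 : ((m : ℝ) - 1) * radSup f Finset.univ S σ
      ≤ ∑ i, radSup f (Finset.univ.erase i) S σ := by
    conv_lhs => unfold radSup
    have hm1 : (1 : ℝ) ≤ m := by exact_mod_cast hm
    rw [Real.mul_iSup_of_nonneg (by linarith)]
    refine ciSup_le fun l => ?_
    have h2 := Finset.sum_le_sum fun i (_ : i ∈ Finset.univ) =>
      le_radSup hrange (Finset.univ.erase i) S σ l
    refine le_trans (le_of_eq ?_) h2
    have h3 : ∀ i, ∑ k ∈ Finset.univ.erase i, sgnB (σ k) * f l (S k)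
        = ∑ k, sgnB (σ k) * f l (S k) - sgnB (σ i) * f l (S i) := fun i => by
      rw [radSum_split f S i]; ring
    simp only [h3, Finset.sum_sub_distrib, Finset.sum_const, Finset.card_univ, Fintype.card_fin,
      nsmul_eq_mul]
    ring
  rw [Finset.sum_sub_distrib, Finset.sum_const, Finset.card_univ, Fintype.card_fin, nsmul_eq_mul]
  linarith

lemma radSup_erase_update (f : ι → X → ℝ) (S : Fin m → X) (i : Fin m) (x : X)
    (σ : Fin m → Bool) :
    radSup f (Finset.univ.erase i) (Function.update S i x) σ
      = radSup f (Finset.univ.erase i) S σ := by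
  unfold radSup
  refine iSup_congr fun l => Finset.sum_congr rfl fun k hk => ?_
  rw [Function.update_of_ne (Finset.ne_of_mem_erase hk)]

lemma radAvg_nonneg (hrange : ∀ l x, f l x ∈ Set.Icc a b) {l₀ : ι} (hl₀ : ∀ x, f l₀ x = 0)
    (J : Finset (Fin m)) (S : Fin m → X) : 0 ≤ radAvg f J S := by
  refine mul_nonneg (by positivity) (Finset.sum_nonneg fun σ _ => ?_)
  simpa [hl₀] using le_radSup hrange J S σ l₀

/-- The Rademacher average, measured in units of the range `b - a`, is self-bounding; the
comparison functions leave out one sample point. -/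
lemma radAvg_selfBounding [MeasurableSpace X] [Countable ι] [Nonempty ι] (hm : 0 < m)
    (hab : a < b) (hmeas : ∀ l, Measurable (f l)) (hrange : ∀ l x, f l x ∈ Set.Icc a b) :
    SelfBounding (fun S : Fin m → X => (b - a)⁻¹ * radAvg f Finset.univ S)
      (fun i S => (b - a)⁻¹ * radAvg f (Finset.univ.erase i) S) := by
  have hc : 0 < b - a := sub_pos.2 hab
  have hN : (0 : ℝ) < Fintype.card (Fin m → Bool) := by exact_mod_cast Fintype.card_pos
  refine ⟨(BddMeas.const _).mul (radAvg_bddMeas hmeas hrange _),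
    fun i => (BddMeas.const _).mul (radAvg_bddMeas hmeas hrange _), ?_, ?_, ?_, ?_⟩
  · intro i S x
    simp only [radAvg, radSup_erase_update]
  · intro i S
    refine mul_le_mul_of_nonneg_left (mul_le_mul_of_nonneg_left ?_ (by positivity)) (by positivity)
    have h := Finset.sum_le_sum fun σ (_ : σ ∈ Finset.univ) =>
      two_mul_radSup_erase_le hrange S i σ
    rw [sum_radSup_flip, ← Finset.mul_sum] at h
    linarith
  · intro i S
    have h := Finset.sum_le_sum fun σ (_ : σ ∈ Finset.univ) => radSup_add_flip_le hrange S i σ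
    rw [sum_radSup_flip, Finset.sum_add_distrib, ← Finset.mul_sum, Finset.sum_const,
      Finset.card_univ, nsmul_eq_mul] at h
    have h2 : radAvg f Finset.univ S ≤ radAvg f (Finset.univ.erase i) S + (b - a) := by
      unfold radAvg
      rw [inv_mul_le_iff₀ hN, mul_add, mul_inv_cancel_left₀ hN.ne']
      nlinarith [mul_pos hN hc]
    calc (b - a)⁻¹ * radAvg f Finset.univ S
        ≤ (b - a)⁻¹ * (radAvg f (Finset.univ.erase i) S + (b - a)) :=
          mul_le_mul_of_nonneg_left h2 (by positivity)
      _ = _ := by rw [mul_add, inv_mul_cancel₀ hc.ne']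
  · intro S
    have h := Finset.sum_le_sum fun σ (_ : σ ∈ Finset.univ) =>
      sum_radSup_sub_erase_le hm hrange S σ
    rw [Finset.sum_comm] at h
    have h2 := mul_le_mul_of_nonneg_left h
      (by positivity : 0 ≤ (b - a)⁻¹ * (Fintype.card (Fin m → Bool) : ℝ)⁻¹)
    refine le_trans (le_of_eq ?_) (h2.trans (le_of_eq ?_))
    · rw [Finset.mul_sum]
      refine Finset.sum_congr rfl fun i _ => ?_
      rw [Finset.sum_sub_distrib]
      unfold radAvg
      ring
    · unfold radAvg
      ring

end RadSup

theorem stmt_2 {X : Type*} [MeasurableSpace X] {ι : Type*} [Countable ι]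
    (f : ι → X → ℝ) (a b : ℝ) (ha : a ≤ 0) (hb : 0 < b)
    (hmeas : ∀ l : ι, Measurable (f l))
    (hrange : ∀ (l : ι) (x : X), f l x ∈ Set.Icc a b)
    (hzero : ∃ l₀ : ι, ∀ x : X, f l₀ x = 0)
    (μ : Measure X) [IsProbabilityMeasure μ] (m : ℕ) (hm : 0 < m)
    (δ : ℝ) (hδ : δ ∈ Set.Ioo (0 : ℝ) 1) :
    1 - δ ≤ ((Measure.pi fun _ : Fin m => μ)
        {S : Fin m → X | rc f 1 m μ ≤ era f 1 m S + (b - a) * Real.log (1 / δ) / m +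
          Real.sqrt (((b - a) * Real.log (1 / δ) / m) ^ 2 +
            2 * (b - a) * Real.log (1 / δ) * era f 1 m S / m)}).toReal := by
  obtain ⟨l₀, hl₀⟩ := hzero
  have : Nonempty ι := ⟨l₀⟩
  have hab : a < b := by linarith
  have hc : 0 < b - a := sub_pos.2 hab
  have hm0 : (0 : ℝ) < m := by exact_mod_cast hm
  have hL : 0 < Real.log (1 / δ) := Real.log_pos (by rw [one_div]; exact (one_lt_inv₀ hδ.1).2 hδ.2)
  have hexp : Real.exp (-Real.log (1 / δ)) = δ := by
    rw [one_div, Real.log_inv, neg_neg, Real.exp_log hδ.1]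
  set L := Real.log (1 / δ)
  set c := b - a
  set P := Measure.pi fun _ : Fin m => μ with hP
  set Z : (Fin m → X) → ℝ := fun S => c⁻¹ * radAvg f Finset.univ S with hZ
  have hsb := radAvg_selfBounding (f := f) hm hab hmeas hrange
  have hera : ∀ S, era f 1 m S = c / m * Z S := by
    intro S
    rw [era_one_eq, hZ]
    field_simp
  set E := ∫ S, Z S ∂P with hE
  have hrc : rc f 1 m μ = c / m * E := by
    rw [rc, hE, ← integral_const_mul]
    exact integral_congr_ae (Filter.Eventually.of_forall hera)
  have hZ0 : ∀ S, 0 ≤ Z S := fun S =>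
    mul_nonneg (by positivity) (radAvg_nonneg hrange hl₀ _ S)
  set A : Set (Fin m → X) := {S : Fin m → X | rc f 1 m μ ≤ era f 1 m S + c * L / m +
          Real.sqrt ((c * L / m) ^ 2 + 2 * c * L * era f 1 m S / m)} with hA
  -- in units of `c / m`, a sample outside `A` has `E Z > Z + L + √(L² + 2 L Z)`
  have hbad : ∀ S ∈ Aᶜ, 0 < E ∧ Z S ≤ E - Real.sqrt (2 * L * E) := by
    intro S hS
    have hS' : era f 1 m S + c * L / m +
        Real.sqrt ((c * L / m) ^ 2 + 2 * c * L * era f 1 m S / m) < rc f 1 m μ := by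
      simpa [hA] using hS
    have hk : 0 < c / m := div_pos hc hm0
    have hsq : Real.sqrt ((c * L / m) ^ 2 + 2 * c * L * era f 1 m S / m)
        = c / m * Real.sqrt (L ^ 2 + 2 * L * Z S) := by
      rw [hera, show (c * L / m) ^ 2 + 2 * c * L * (c / m * Z S) / m
        = (c / m) ^ 2 * (L ^ 2 + 2 * L * Z S) by ring, Real.sqrt_mul (sq_nonneg _),
        Real.sqrt_sq hk.le]
    rw [hsq, hera, hrc, show c / m * Z S + c * L / m + c / m * Real.sqrt (L ^ 2 + 2 * L * Z S)
      = c / m * (Z S + L + Real.sqrt (L ^ 2 + 2 * L * Z S)) by ring] at hS'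
    have h1 := lt_of_mul_lt_mul_left hS' hk.le
    have h0 := hZ0 S
    have hs := Real.sqrt_nonneg (L ^ 2 + 2 * L * Z S)
    have hs2 := Real.sq_sqrt (by positivity : 0 ≤ L ^ 2 + 2 * L * Z S)
    refine ⟨by linarith, ?_⟩
    have h2 : Real.sqrt (2 * L * E) ≤ E - Z S := by
      rw [Real.sqrt_le_left (by linarith)]
      nlinarith
    linarith
  have hAc : P.real Aᶜ ≤ δ := by
    by_cases hE0 : 0 < E
    · have ht : 0 < Real.sqrt (2 * L * E) := Real.sqrt_pos.2 (by positivity)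
      calc P.real Aᶜ ≤ P.real {S | Z S ≤ E - Real.sqrt (2 * L * E)} :=
            measureReal_mono fun S hS => (hbad S hS).2
        _ ≤ Real.exp (-(Real.sqrt (2 * L * E) ^ 2 / (2 * E))) := hsb.lower_tail μ hE hE0 ht
        _ = δ := by
            rw [Real.sq_sqrt (by positivity), ← hexp]
            congr 1
            field_simp
    · have : Aᶜ = ∅ := Set.eq_empty_of_forall_notMem fun S hS => hE0 (hbad S hS).1
      rw [this]
      simpa using hδ.1.le
  have hun : P.real Set.univ ≤ P.real A + P.real Aᶜ := by
    rw [← Set.union_compl_self A]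
    exact measureReal_union_le _ _
  rw [probReal_univ] at hun
  change 1 - δ ≤ P.real A
  linarith
end
end

section
/- Fix a sample S = (s_1,…,s_m). Let σ be an n×m random matrix whose entries σ_{j,i} are independent uniform Rademacher (±1) random variables. Then for all 0 < ε ≤ R̂(F,S), Pr_σ( R̂(F,S) ≥ R̂ⁿ_m(F,S,σ) + ε ) ≤ exp( − n m ε² / ( 4 ẑ(S) ( R̂(F,S) + ν̂_F(S) ) ) ). -/
/-!
The function `g(σ) = Σ_j sup_f Σ_i σ_{j,i} f(s_i)` changes by at most `2 ẑ(S)` under the flip of one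
sign, and the total decrease `Σ_{j,i} (g - g_{j,i})` over all flips is at most `g + n m ν̂_F(S)`,
because a (near) maximizer `f` of row `j` gives `g - g_{j,i} ≤ σ_{j,i} f(s_i) + |f(s_i)|`. Hence
`W = (g + n m ν̂_F(S)) / (2 ẑ(S))` is self-bounding: `0 ≤ W - W_{j,i} ≤ 1` and
`Σ_{j,i} (W - W_{j,i}) ≤ W`.

For self-bounding functions the entropy method gives the lower tail. Entropy is subadditive over
independent coordinates (`ent_tensor`), and a one-coordinate modified logarithmic Sobolev inequality
(`coordEnt_exp_le`) yields `(1 - e^{-l}) F'(l) ≤ F(l) log F(l)` for `F(l) = E[e^{lW}]`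
(`herbst_ineq`). Integrating, `log F(l) ≤ (e^l - 1) E[W]` for `l < 0` (`log_mean_exp_le`), and
Chernoff's method gives `P(W ≤ E W - t) ≤ exp(-t² / (2 E W))` (`lower_tail`). Since
`E W = n m (R̂ + ν̂) / (2 ẑ)`, taking `t = n m ε / (2 ẑ)` is the claim.

The coordinate structure is handled abstractly: a finite set `Ω` with commuting involutions `τ i`
under which only constant functions are invariant.
-/

open MeasureTheory

noncomputable section

/-! ### Averages and entropy under commuting involutions -/

section
variable {Ω K : Type*}

/-- Average of `g` over the two points `x` and `τ i x`. When `τ i` flips the `i`-th coordinate of a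
sign vector this is the conditional expectation integrating out coordinate `i`. -/
def avg (τ : K → Ω → Ω) (i : K) (g : Ω → ℝ) (x : Ω) : ℝ := (g x + g (τ i x)) / 2

/-- Iterated average: integrates out all coordinates in the list. -/
def avgL (τ : K → Ω → Ω) : List K → (Ω → ℝ) → Ω → ℝ
  | [], g => g
  | i :: L, g => avg τ i (avgL τ L g)

/-- Entropy `Ent(f) = E[f log f] - E[f] log E[f]` with respect to coordinate `i` alone. -/
def coordEnt (τ : K → Ω → Ω) (i : K) (f : Ω → ℝ) (x : Ω) : ℝ :=
  avg τ i (fun y => f y * Real.log (f y)) x - avg τ i f x * Real.log (avg τ i f x)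

/-- Uniform mean over a finite type. -/
def mean [Fintype Ω] (g : Ω → ℝ) : ℝ := (Fintype.card Ω : ℝ)⁻¹ * ∑ x, g x

variable (τ : K → Ω → Ω)

lemma avgL_add (L : List K) (g h : Ω → ℝ) (x : Ω) :
    avgL τ L (fun y => g y + h y) x = avgL τ L g x + avgL τ L h x := by
  induction L generalizing x with
  | nil => rfl
  | cons i L ih => simp only [avgL, avg, ih]; ring

lemma avgL_mul_const (L : List K) (g : Ω → ℝ) (c : ℝ) (x : Ω) :
    avgL τ L (fun y => g y * c) x = avgL τ L g x * c := by
  induction L generalizing x with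
  | nil => rfl
  | cons i L ih => simp only [avgL, avg, ih]; ring

lemma avgL_mono (L : List K) {g h : Ω → ℝ} (hgh : ∀ y, g y ≤ h y) (x : Ω) :
    avgL τ L g x ≤ avgL τ L h x := by
  induction L generalizing x with
  | nil => exact hgh x
  | cons i L ih => simp only [avgL, avg]; linarith [ih x, ih (τ i x)]

lemma avgL_pos (L : List K) {g : Ω → ℝ} (hg : ∀ y, 0 < g y) (x : Ω) :
    0 < avgL τ L g x := by
  induction L generalizing x with
  | nil => exact hg x
  | cons i L ih => simp only [avgL, avg]; linarith [ih x, ih (τ i x)]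

lemma avgL_comp (hcomm : ∀ i j x, τ i (τ j x) = τ j (τ i x)) (L : List K) (g : Ω → ℝ) (j : K)
    (x : Ω) : avgL τ L (fun y => g (τ j y)) x = avgL τ L g (τ j x) := by
  induction L generalizing x with
  | nil => rfl
  | cons i L ih => simp only [avgL, avg, ih, hcomm i j]

lemma avgL_invariant (hcomm : ∀ i j x, τ i (τ j x) = τ j (τ i x))
    (hinv : ∀ i x, τ i (τ i x) = x) (L : List K) (g : Ω → ℝ) (j : K) (hj : j ∈ L) (x : Ω) :
    avgL τ L g (τ j x) = avgL τ L g x := by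
  induction L generalizing x with
  | nil => simp at hj
  | cons i L ih =>
    simp only [avgL, avg]
    rcases List.mem_cons.1 hj with rfl | h
    · rw [hinv, add_comm]
    · rw [ih h, hcomm, ih h]

lemma sum_avg [Fintype Ω] (hinv : ∀ i x, τ i (τ i x) = x) (i : K) (g : Ω → ℝ) :
    ∑ x, avg τ i g x = ∑ x, g x := by
  have h : ∑ x, g (τ i x) = ∑ x, g x :=
    Equiv.sum_comp (Function.Involutive.toPerm (τ i) (hinv i)) g
  simp only [avg, ← Finset.sum_div, Finset.sum_add_distrib, h]
  ring

lemma sum_avgL [Fintype Ω] (hinv : ∀ i x, τ i (τ i x) = x) (L : List K) (g : Ω → ℝ) :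
    ∑ x, avgL τ L g x = ∑ x, g x := by
  induction L with
  | nil => rfl
  | cons i L ih => simp only [avgL, sum_avg τ hinv, ih]

/-- Averaging over all coordinates gives an invariant, hence constant, function with the same sum
as `g`, so it is the uniform mean. -/
lemma avgL_eq_mean [Fintype Ω] [Fintype K]
    (hcomm : ∀ i j x, τ i (τ j x) = τ j (τ i x)) (hinv : ∀ i x, τ i (τ i x) = x)
    (hconst : ∀ g : Ω → ℝ, (∀ i x, g (τ i x) = g x) → ∀ x y, g x = g y)
    (g : Ω → ℝ) (x : Ω) :
    avgL τ Finset.univ.toList g x = mean g := by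
  have h : ∀ y, avgL τ Finset.univ.toList g y = avgL τ Finset.univ.toList g x := fun y =>
    hconst _ (fun i z => avgL_invariant τ hcomm hinv _ g i (by simp) z) y x
  have hs := sum_avgL τ hinv Finset.univ.toList g
  have : Nonempty Ω := ⟨x⟩
  have hc : (Fintype.card Ω : ℝ) ≠ 0 := by exact_mod_cast Fintype.card_ne_zero
  rw [mean, ← hs, Finset.sum_congr rfl (fun y _ => h y)]
  simp [hc]

lemma mul_log_sub_mul_log_ge {m u : ℝ} (hm : 0 < m) (hu : 0 < u) :
    m - u ≤ m * Real.log m - m * Real.log u := by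
  have h := Real.log_le_sub_one_of_pos (div_pos hu hm)
  rw [Real.log_div hu.ne' hm.ne'] at h
  have := mul_le_mul_of_nonneg_left h hm.le
  have e : m * (u / m - 1) = u - m := by field_simp
  rw [e] at this
  linarith

/-- Variational lower bound for the two-point entropy: it is a supremum of functions linear in
`(a, b)`, attained at `(p, q) = (a, b)`. -/
lemma two_point_dual {a b p q : ℝ} (ha : 0 < a) (hb : 0 < b) (hp : 0 < p) (hq : 0 < q) :
    (a * (Real.log p - Real.log ((p + q) / 2)) + b * (Real.log q - Real.log ((p + q) / 2))) / 2 ≤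
      (a * Real.log a + b * Real.log b) / 2 - (a + b) / 2 * Real.log ((a + b) / 2) := by
  have hr : 0 < (a + b) / (p + q) := by positivity
  have h1 := mul_log_sub_mul_log_ge ha (mul_pos hp hr)
  have h2 := mul_log_sub_mul_log_ge hb (mul_pos hq hr)
  have e : (a + b) / (p + q) = ((a + b) / 2) / ((p + q) / 2) := by field_simp
  have hl : Real.log ((a + b) / (p + q)) = Real.log ((a + b) / 2) - Real.log ((p + q) / 2) := by
    rw [e, Real.log_div (by positivity) (by positivity)]
  rw [Real.log_mul hp.ne' hr.ne', hl] at h1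
  rw [Real.log_mul hq.ne' hr.ne', hl] at h2
  have e2 : p * ((a + b) / (p + q)) + q * ((a + b) / (p + q)) = a + b := by field_simp
  linarith

/-- Jensen's inequality for the two-point entropy, which is convex as a supremum of linear
functions. -/
lemma coordEnt_avgL_le (hcomm : ∀ i j x, τ i (τ j x) = τ j (τ i x)) (L : List K) (i : K)
    {f : Ω → ℝ} (hf : ∀ x, 0 < f x) (x : Ω) :
    coordEnt τ i (avgL τ L f) x ≤ avgL τ L (coordEnt τ i f) x := by
  set p := avgL τ L f x with hp
  set q := avgL τ L f (τ i x) with hq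
  have hp0 : 0 < p := avgL_pos τ L hf x
  have hq0 : 0 < q := avgL_pos τ L hf _
  have h := avgL_mono τ L (fun y => two_point_dual (hf y) (hf (τ i y)) hp0 hq0) x
  simp only [add_div _ _ (2 : ℝ), mul_div_assoc] at h
  rw [avgL_add, avgL_mul_const, avgL_mul_const, avgL_comp τ hcomm, ← hp, ← hq] at h
  refine le_trans (le_of_eq ?_) (h.trans (le_of_eq ?_))
  · simp only [coordEnt, avg, ← hp, ← hq, add_div]; ring
  · congr 1; funext y; simp only [coordEnt, avg, add_div, mul_div_assoc]

/-- Subadditivity (tensorization) of entropy. -/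
lemma ent_tensor_s5 (hcomm : ∀ i j x, τ i (τ j x) = τ j (τ i x))
    (hinv : ∀ i x, τ i (τ i x) = x) (L : List K)
    {f : Ω → ℝ} (hf : ∀ x, 0 < f x) (x : Ω) :
    avgL τ L (fun y => f y * Real.log (f y)) x - avgL τ L f x * Real.log (avgL τ L f x) ≤
      avgL τ L (fun y => (L.map fun i => coordEnt τ i f y).sum) x := by
  induction L generalizing x with
  | nil => simp [avgL]
  | cons i L ih =>
    have h1 := ih x
    have h2 := ih (τ i x)
    have h3 := coordEnt_avgL_le τ hcomm L i hf x
    have h4 : avgL τ L (coordEnt τ i f) (τ i x) = avgL τ L (coordEnt τ i f) x := by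
      rw [← avgL_comp τ hcomm]
      congr 1; funext y; simp only [coordEnt, avg, hinv]
      ring_nf
    simp only [List.map_cons, List.sum_cons, avgL, avg]
    rw [avgL_add, avgL_add, h4]
    simp only [coordEnt, avg] at h3
    linarith

/-- Modified logarithmic Sobolev inequality in one coordinate, from
`Ent(Y) ≤ E[Y log (Y / u) - Y + u]` at `u = exp (l * min)` and the convexity bound
`exp (-l d) ≤ 1 - d + d exp (-l)` for `d ∈ [0, 1]`. -/
lemma coordEnt_exp_le (hinv : ∀ i x, τ i (τ i x) = x) (W : Ω → ℝ) (i : K) (l : ℝ)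
    (hd : ∀ x, W x - W (τ i x) ≤ 1) (x : Ω) :
    coordEnt τ i (fun y => Real.exp (l * W y)) x ≤
      avg τ i (fun y => (Real.exp (-l) + l - 1) *
        (Real.exp (l * W y) * (W y - min (W y) (W (τ i y))))) x := by
  set u := min (W x) (W (τ i x)) with hu
  have hu' : min (W (τ i x)) (W x) = u := min_comm _ _
  have key : ∀ w, 0 ≤ w - u → w - u ≤ 1 →
      Real.exp (l * w) * (l * w) - Real.exp (l * w) * (l * u) - Real.exp (l * w) + Real.exp (l * u)
        ≤ (Real.exp (-l) + l - 1) * (Real.exp (l * w) * (w - u)) := by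
    intro w h0 h1
    have hc := convexOn_exp.2 (Set.mem_univ 0) (Set.mem_univ (-l)) (sub_nonneg.2 h1) h0 (by ring)
    simp only [smul_eq_mul, mul_zero, zero_add, Real.exp_zero, mul_one] at hc
    have e : Real.exp (l * u) = Real.exp (l * w) * Real.exp ((w - u) * -l) := by
      rw [← Real.exp_add]; ring_nf
    rw [e]
    have := mul_le_mul_of_nonneg_left hc (Real.exp_pos (l * w)).le
    nlinarith
  have hd2 := hd (τ i x)
  rw [hinv] at hd2
  have k1 := key (W x) (by linarith [min_le_left (W x) (W (τ i x))])
    (by have := hd x; rcases min_choice (W x) (W (τ i x)) with h | h <;> rw [hu, h] <;> linarith)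
  have k2 := key (W (τ i x)) (by linarith [min_le_right (W x) (W (τ i x))])
    (by rcases min_choice (W x) (W (τ i x)) with h | h <;> rw [hu, h] <;> linarith)
  have hm := mul_log_sub_mul_log_ge (m := (Real.exp (l * W x) + Real.exp (l * W (τ i x))) / 2)
    (by positivity) (Real.exp_pos (l * u))
  rw [Real.log_exp] at hm
  simp only [coordEnt, avg, hinv, Real.log_exp, ← hu, hu']
  linarith

lemma mean_add [Fintype Ω] (g h : Ω → ℝ) : mean (fun x => g x + h x) = mean g + mean h := by
  simp [mean, Finset.sum_add_distrib, mul_add]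

lemma mean_mono [Fintype Ω] {g h : Ω → ℝ} (hgh : ∀ x, g x ≤ h x) : mean g ≤ mean h :=
  mul_le_mul_of_nonneg_left (Finset.sum_le_sum fun x _ => hgh x) (by positivity)

lemma mean_const_mul [Fintype Ω] (c : ℝ) (g : Ω → ℝ) : mean (fun x => c * g x) = c * mean g := by
  simp only [mean, ← Finset.mul_sum]; ring

/-- For a self-bounding `W`, the Laplace transform `F l = E[exp (l W)]` satisfies
`(1 - exp (-l)) F' l ≤ F l log (F l)`. -/
lemma herbst_ineq [Fintype Ω] [Nonempty Ω] [Fintype K]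
    (hcomm : ∀ i j x, τ i (τ j x) = τ j (τ i x)) (hinv : ∀ i x, τ i (τ i x) = x)
    (hconst : ∀ g : Ω → ℝ, (∀ i x, g (τ i x) = g x) → ∀ x y, g x = g y)
    (W : Ω → ℝ) (hd : ∀ i x, W x - W (τ i x) ≤ 1)
    (hsb : ∀ x, ∑ i, (W x - min (W x) (W (τ i x))) ≤ W x) (l : ℝ) :
    (1 - Real.exp (-l)) * mean (fun x => Real.exp (l * W x) * W x) ≤
      mean (fun x => Real.exp (l * W x)) * Real.log (mean fun x => Real.exp (l * W x)) := by
  obtain ⟨x⟩ := ‹Nonempty Ω›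
  have h := ent_tensor_s5 τ hcomm hinv Finset.univ.toList (f := fun y => Real.exp (l * W y))
    (fun y => Real.exp_pos _) x
  simp only [avgL_eq_mean τ hcomm hinv hconst, Finset.sum_map_toList, Real.log_exp] at h
  have hφ : 0 ≤ Real.exp (-l) + l - 1 := by linarith [Real.add_one_le_exp (-l)]
  have h2 : mean (fun y => ∑ i, coordEnt τ i (fun y => Real.exp (l * W y)) y) ≤
      (Real.exp (-l) + l - 1) * mean (fun x => Real.exp (l * W x) * W x) := by
    calc _ ≤ mean (fun y => ∑ i, avg τ i (fun y => (Real.exp (-l) + l - 1) *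
        (Real.exp (l * W y) * (W y - min (W y) (W (τ i y))))) y) :=
          mean_mono fun y => Finset.sum_le_sum fun i _ => coordEnt_exp_le τ hinv W i l (hd i) y
      _ = mean (fun y => ∑ i, (Real.exp (-l) + l - 1) *
        (Real.exp (l * W y) * (W y - min (W y) (W (τ i y))))) := by
          unfold mean
          congr 1
          rw [Finset.sum_comm, Finset.sum_congr rfl (fun i _ => sum_avg τ hinv i _),
            Finset.sum_comm]
      _ ≤ mean (fun y => (Real.exp (-l) + l - 1) * (Real.exp (l * W y) * W y)) := by
          refine mean_mono fun y => ?_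
          rw [← Finset.mul_sum, ← Finset.mul_sum]
          exact mul_le_mul_of_nonneg_left
            (mul_le_mul_of_nonneg_left (hsb y) (Real.exp_pos _).le) hφ
      _ = _ := mean_const_mul _ _
  have h3 : mean (fun y => Real.exp (l * W y) * (l * W y)) =
      l * mean (fun y => Real.exp (l * W y) * W y) := by
    rw [← mean_const_mul]; congr 1; funext y; ring
  rw [h3] at h
  linarith

lemma mean_pos [Fintype Ω] [Nonempty Ω] {g : Ω → ℝ} (hg : ∀ x, 0 < g x) : 0 < mean g :=
  mul_pos (by simp [Fintype.card_pos]) (Finset.sum_pos (fun x _ => hg x) Finset.univ_nonempty)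

lemma hasDerivAt_mean_exp [Fintype Ω] (W : Ω → ℝ) (l : ℝ) :
    HasDerivAt (fun l => mean fun x => Real.exp (l * W x))
      (mean fun x => Real.exp (l * W x) * W x) l := by
  unfold mean
  refine HasDerivAt.const_mul _ (HasDerivAt.fun_sum fun x _ => ?_)
  simpa using ((hasDerivAt_id l).mul_const (W x)).exp

/-- Integrating the differential inequality: it says that `log (F l) / (exp l - 1)` is antitone on
`l < 0`, and its limit at `0⁻` is `E[W]`. -/
lemma log_mean_exp_le [Fintype Ω] [Nonempty Ω] (W : Ω → ℝ)
    (hH : ∀ l, (1 - Real.exp (-l)) * mean (fun x => Real.exp (l * W x) * W x) ≤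
      mean (fun x => Real.exp (l * W x)) * Real.log (mean fun x => Real.exp (l * W x)))
    (l : ℝ) (hl : l < 0) :
    Real.log (mean fun x => Real.exp (l * W x)) ≤ mean W * (Real.exp l - 1) := by
  set F : ℝ → ℝ := fun l => mean fun x => Real.exp (l * W x) with hF
  set D : ℝ → ℝ := fun l => mean fun x => Real.exp (l * W x) * W x with hD
  have hFpos : ∀ l, 0 < F l := fun l => mean_pos fun x => Real.exp_pos _
  have hFd : ∀ l, HasDerivAt F (D l) l := hasDerivAt_mean_exp W
  set H : ℝ → ℝ := fun l => Real.log (F l) with hHdef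
  have hHd : ∀ l, HasDerivAt H (D l / F l) l := fun l => (hFd l).log (hFpos l).ne'
  have hF0 : F 0 = 1 := by simp [hF, mean]
  have hH0 : H 0 = 0 := by simp [hHdef, hF0]
  have hD0 : D 0 = mean W := by simp [hD]
  have hE : ∀ l, HasDerivAt (fun l => Real.exp l - 1) (Real.exp l) l := fun l =>
    (Real.hasDerivAt_exp l).sub_const 1
  have hne : ∀ l < 0, Real.exp l - 1 < 0 := fun l hl => by
    have := Real.exp_lt_exp.2 hl
    rw [Real.exp_zero] at this
    linarith
  have hQd : ∀ l < 0, HasDerivAt (fun l => H l / (Real.exp l - 1))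
      ((D l / F l * (Real.exp l - 1) - H l * Real.exp l) / (Real.exp l - 1) ^ 2) l :=
    fun l hl => (hHd l).fun_div (hE l) (hne l hl).ne
  have hanti : AntitoneOn (fun l => H l / (Real.exp l - 1)) (Set.Iio 0) := by
    refine antitoneOn_of_deriv_nonpos (convex_Iio 0)
      (fun l hl => (hQd l hl).continuousAt.continuousWithinAt)
      (fun l hl => (hQd l (by simpa using hl)).differentiableAt.differentiableWithinAt) ?_
    intro l hl
    rw [interior_Iio] at hl
    rw [(hQd l hl).deriv]
    refine div_nonpos_of_nonpos_of_nonneg ?_ (sq_nonneg _)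
    have h1 := hH l
    have h2 : (1 - Real.exp (-l)) * (D l / F l) ≤ H l := by
      rw [← mul_div_assoc, div_le_iff₀ (hFpos l), mul_comm (H l)]
      exact h1
    have h3 := mul_le_mul_of_nonneg_left h2 (Real.exp_pos l).le
    have h4 : Real.exp l * Real.exp (-l) = 1 := by rw [← Real.exp_add]; simp
    have h5 : Real.exp l * ((1 - Real.exp (-l)) * (D l / F l)) =
        D l / F l * (Real.exp l - 1) := by
      linear_combination -(D l / F l) * h4
    linarith
  have hlim : Filter.Tendsto (fun l => H l / (Real.exp l - 1)) (nhdsWithin 0 (Set.Iio 0))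
      (nhds (mean W)) := by
    have s1 := (hasDerivAt_iff_tendsto_slope_zero.1 (hHd 0))
    have s2 := (hasDerivAt_iff_tendsto_slope_zero.1 (hE 0))
    have s3 := s1.div s2 (by simp)
    simp only [hH0, hF0, hD0, zero_add, Real.exp_zero, sub_self, sub_zero, div_one,
      smul_eq_mul] at s3
    refine (s3.mono_left (nhdsWithin_mono _ (fun x hx => ne_of_lt hx))).congr' ?_
    filter_upwards [self_mem_nhdsWithin] with t ht
    have : t ≠ 0 := ne_of_lt ht
    simp only [Pi.div_apply]
    rw [mul_div_mul_left _ _ (inv_ne_zero this)]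
  have hge : mean W ≤ H l / (Real.exp l - 1) := by
    refine le_of_tendsto hlim ?_
    have : Set.Ioo l 0 ∈ nhdsWithin (0 : ℝ) (Set.Iio 0) := Ioo_mem_nhdsLT hl
    filter_upwards [this] with t ht
    exact hanti hl ht.2 ht.1.le
  rwa [le_div_iff_of_neg (hne l hl)] at hge

end

/-! ### Sign matrices -/

lemma integral_radMeasure (n m : ℕ) (g : (Fin n → Fin m → Bool) → ℝ) :
    ∫ σ, g σ ∂(radMeasure n m) = mean g := by
  rw [radMeasure, PMF.integral_eq_sum, mean, Finset.mul_sum]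
  refine Finset.sum_congr rfl fun x _ => ?_
  rw [PMF.uniformOfFintype_apply, ENNReal.toReal_inv, ENNReal.toReal_natCast, smul_eq_mul]

/-- The supremum `sup_l Σ_k s_k v_l(k)` contributed by one row `s` of signs. -/
def rowSup {ι : Type*} {m : ℕ} (v : ι → Fin m → ℝ) (s : Fin m → Bool) : ℝ :=
  ⨆ l : ι, ∑ k, sgnB (s k) * v l k

/-- Flip the `i`-th sign of a row. -/
def flipRow {m : ℕ} (i : Fin m) (s : Fin m → Bool) : Fin m → Bool :=
  fun k => xor (decide (k = i)) (s k)

/-- Flip the entry `p` of a sign matrix. Written with `xor` so that flips visibly commute. -/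
def flipEntry {n m : ℕ} (p : Fin n × Fin m) (σ : Fin n → Fin m → Bool) : Fin n → Fin m → Bool :=
  fun j k => xor (decide (j = p.1 ∧ k = p.2)) (σ j k)

lemma flipEntry_same {n m : ℕ} (j : Fin n) (i : Fin m) (σ : Fin n → Fin m → Bool) :
    flipEntry (j, i) σ j = flipRow i (σ j) := by
  funext k; simp [flipEntry, flipRow]

lemma flipEntry_ne {n m : ℕ} (j : Fin n) (i : Fin m) (σ : Fin n → Fin m → Bool) {j' : Fin n}
    (h : j' ≠ j) : flipEntry (j, i) σ j' = σ j' := by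
  funext k; simp [flipEntry, h]

lemma flipEntry_comm {n m : ℕ} (p q : Fin n × Fin m) (σ : Fin n → Fin m → Bool) :
    flipEntry p (flipEntry q σ) = flipEntry q (flipEntry p σ) := by
  funext j k; simp only [flipEntry]; rw [Bool.xor_left_comm]

lemma flipEntry_flipEntry {n m : ℕ} (p : Fin n × Fin m) (σ : Fin n → Fin m → Bool) :
    flipEntry p (flipEntry p σ) = σ := by
  funext j k; simp [flipEntry]

/-- Flips act transitively on sign matrices: the entries of `x` are changed to those of `y` one at
a time. -/
lemma eq_of_flipEntry_invariant {n m : ℕ} (g : (Fin n → Fin m → Bool) → ℝ)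
    (hg : ∀ p x, g (flipEntry p x) = g x) (x y : Fin n → Fin m → Bool) : g x = g y := by
  have key : ∀ s : Finset (Fin n × Fin m),
      g (fun j k => if (j, k) ∈ s then y j k else x j k) = g x := by
    intro s
    induction s using Finset.induction_on with
    | empty => simp
    | insert p s hp ih =>
      by_cases h : x p.1 p.2 = y p.1 p.2
      · rw [← ih]
        congr 1
        funext j k
        by_cases e : (j, k) = p
        · subst e; simp [hp, h]
        · simp [e]
      · rw [← ih, ← hg p]
        congr 1
        funext j k
        by_cases e : (j, k) = p
        · subst e
          simp only [flipEntry, hp, Finset.mem_insert_self, if_true, if_false]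
          revert h
          cases x j k <;> cases y j k <;> simp
        · have e' : ¬ (j = p.1 ∧ k = p.2) := fun h => e (Prod.ext h.1 h.2)
          simp [flipEntry, e, e']
  have := key Finset.univ
  simpa using this.symm

/-! ### Self-bounding property of the row supremum -/

section
variable {ι : Type*} {m : ℕ} (v : ι → Fin m → ℝ) {z : ℝ}

lemma row_le_abs (s : Fin m → Bool) (l : ι) : ∑ k, sgnB (s k) * v l k ≤ ∑ k, |v l k| :=
  Finset.sum_le_sum fun k _ => (le_abs_self _).trans (by rw [abs_mul, abs_sgnB, one_mul])

lemma bdd_abs (hv : ∀ l k, |v l k| ≤ z) : BddAbove (Set.range fun l => ∑ k, |v l k|) := by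
  refine ⟨∑ _k : Fin m, z, ?_⟩
  rintro _ ⟨l, rfl⟩
  exact Finset.sum_le_sum fun k _ => hv l k

lemma bdd_row (hv : ∀ l k, |v l k| ≤ z) (s : Fin m → Bool) :
    BddAbove (Set.range fun l => ∑ k, sgnB (s k) * v l k) := by
  refine ⟨∑ _k : Fin m, z, ?_⟩
  rintro _ ⟨l, rfl⟩
  exact (row_le_abs v s l).trans (Finset.sum_le_sum fun k _ => hv l k)

lemma row_flip (s : Fin m → Bool) (i : Fin m) (l : ι) :
    ∑ k, sgnB (s k) * v l k = ∑ k, sgnB (flipRow i s k) * v l k + 2 * (sgnB (s i) * v l i) := by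
  rw [← sub_eq_iff_eq_add', ← Finset.sum_sub_distrib, Finset.sum_eq_single i]
  · simp only [flipRow, decide_true, Bool.true_xor, sgnB_not]; ring
  · intro k _ hk; simp [flipRow, hk]
  · simp

lemma le_rowSup (hv : ∀ l k, |v l k| ≤ z) (s : Fin m → Bool) (l : ι) :
    ∑ k, sgnB (s k) * v l k ≤ rowSup v s := le_ciSup (bdd_row v hv s) l

lemma rowSup_sub_le [Nonempty ι] (hv : ∀ l k, |v l k| ≤ z) (s : Fin m → Bool) (i : Fin m) :
    rowSup v s - rowSup v (flipRow i s) ≤ 2 * z := by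
  have : rowSup v s ≤ rowSup v (flipRow i s) + 2 * z := by
    refine ciSup_le fun l => ?_
    rw [row_flip v s i l]
    have h1 := le_rowSup v hv (flipRow i s) l
    have h2 : sgnB (s i) * v l i ≤ z := by
      refine (le_abs_self _).trans ?_
      rw [abs_mul, abs_sgnB, one_mul]; exact hv l i
    linarith
  linarith

/-- If `l` nearly attains the supremum, flipping sign `i` lowers it by at most about
`2 (s_i v_l(i))⁺ = s_i v_l(i) + |v_l(i)|`; summing over `i` gives the bound. -/
lemma sum_rowSup_sub_min_le [Nonempty ι] (hv : ∀ l k, |v l k| ≤ z) (s : Fin m → Bool) :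
    ∑ i, (rowSup v s - min (rowSup v s) (rowSup v (flipRow i s))) ≤
      rowSup v s + ⨆ l, ∑ k, |v l k| := by
  have key : ∀ η > 0, ∑ i, (rowSup v s - min (rowSup v s) (rowSup v (flipRow i s))) ≤
      rowSup v s + (⨆ l, ∑ k, |v l k|) + m * η := by
    -- the supremum need not be attained, hence the slack `η`
    intro η hη
    obtain ⟨l, hl⟩ := exists_lt_of_lt_ciSup (show rowSup v s - η < rowSup v s by linarith)
    have h1 : ∀ i, rowSup v s - min (rowSup v s) (rowSup v (flipRow i s)) ≤
        sgnB (s i) * v l i + |v l i| + η := by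
      intro i
      have h2 := row_flip v s i l
      have h3 := le_rowSup v hv (flipRow i s) l
      have h4 : |sgnB (s i) * v l i| = |v l i| := by rw [abs_mul, abs_sgnB, one_mul]
      have h5 := le_abs_self (sgnB (s i) * v l i)
      have h6 := neg_abs_le (sgnB (s i) * v l i)
      rcases min_choice (rowSup v s) (rowSup v (flipRow i s)) with h | h <;> rw [h] <;> linarith
    refine (Finset.sum_le_sum fun i _ => h1 i).trans ?_
    rw [Finset.sum_add_distrib, Finset.sum_add_distrib]
    have h7 := le_rowSup v hv s l
    have h8 : ∑ k, |v l k| ≤ ⨆ l, ∑ k, |v l k| := le_ciSup (bdd_abs v hv) l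
    simp only [Finset.sum_const, Finset.card_univ, Fintype.card_fin, nsmul_eq_mul]
    linarith
  refine le_of_forall_pos_le_add fun δ hδ => ?_
  refine (key (δ / (m + 1)) (by positivity)).trans ?_
  have : (m : ℝ) * (δ / (m + 1)) ≤ δ := by
    rw [← mul_div_assoc, div_le_iff₀ (by positivity)]; nlinarith
  linarith

end

/-! ### The tail bound -/

lemma exp_le_quadratic_of_nonpos {x : ℝ} (hx : x ≤ 0) : Real.exp x ≤ 1 + x + x ^ 2 / 2 := by
  have h := Real.quadratic_le_exp_of_nonneg (neg_nonneg.2 hx)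
  have h1 : Real.exp x * Real.exp (-x) = 1 := by rw [← Real.exp_add]; simp
  have h2 : 0 < 1 + x + x ^ 2 / 2 := by nlinarith [sq_nonneg (x + 1)]
  have h3 := mul_le_mul_of_nonneg_left h h2.le
  have h4 : 1 ≤ (1 + x + x ^ 2 / 2) * Real.exp (-x) := by nlinarith [sq_nonneg (x ^ 2)]
  nlinarith [Real.exp_pos x]

/-- Lower tail of a self-bounding function, `P(W ≤ E W - t) ≤ exp (-t² / (2 E W))`, by Chernoff's
method. -/
lemma lower_tail {n m : ℕ} (W : (Fin n → Fin m → Bool) → ℝ)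
    (hd : ∀ p x, W x - W (flipEntry p x) ≤ 1)
    (hsb : ∀ x, ∑ p, (W x - min (W x) (W (flipEntry p x))) ≤ W x)
    (hE : 0 < mean W) {t : ℝ} (ht : 0 < t) :
    (radMeasure n m {σ | W σ ≤ mean W - t}).toReal ≤ Real.exp (-(t ^ 2) / (2 * mean W)) := by
  have : IsProbabilityMeasure (radMeasure n m) := by unfold radMeasure; infer_instance
  -- the minimizer of `mean W * l ^ 2 / 2 + l * t`
  set l : ℝ := -(t / mean W) with hldef
  have hl : l < 0 := neg_neg_of_pos (div_pos ht hE)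
  have h1 := ProbabilityTheory.measure_le_le_exp_mul_mgf (μ := radMeasure n m) (X := W)
    (mean W - t) hl.le .of_finite
  have h2 := log_mean_exp_le W (fun l => herbst_ineq flipEntry flipEntry_comm
    flipEntry_flipEntry eq_of_flipEntry_invariant W hd hsb l) l hl
  rw [Real.log_le_iff_le_exp (mean_pos fun x => Real.exp_pos _)] at h2
  rw [ProbabilityTheory.mgf, integral_radMeasure] at h1
  refine h1.trans ((mul_le_mul_of_nonneg_left h2 (Real.exp_pos _).le).trans ?_)
  rw [← Real.exp_add, Real.exp_le_exp]
  have h3 := mul_le_mul_of_nonneg_left (exp_le_quadratic_of_nonpos hl.le) hE.le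
  have h4 : mean W * l = -t := by rw [hldef]; field_simp
  have h5 : -(t ^ 2) / (2 * mean W) = l * t / 2 := by rw [hldef]; field_simp
  have h6 : mean W * l ^ 2 = -t * l := by rw [← h4]; ring
  rw [h5]
  linarith

theorem stmt_5 {X : Type*} [MeasurableSpace X] {ι : Type*} [Countable ι]
    (f : ι → X → ℝ) (a b : ℝ) (ha : a ≤ 0) (hb : 0 < b)
    (hmeas : ∀ l : ι, Measurable (f l))
    (hrange : ∀ (l : ι) (x : X), f l x ∈ Set.Icc a b)
    (hzero : ∃ l₀ : ι, ∀ x : X, f l₀ x = 0)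
    (n m : ℕ) (hn : 0 < n) (hm : 0 < m) (S : Fin m → X)
    (ε : ℝ) (hε0 : 0 < ε) (hε : ε ≤ era f n m S) :
    (radMeasure n m
        {σ : Fin n → Fin m → Bool | era f n m S ≥ mcera f n m S σ + ε}).toReal ≤
      Real.exp (-((n : ℝ) * (m : ℝ) * ε ^ 2) /
        (4 * zhat f S * (era f n m S + nuhat f S))) := by
  have : IsProbabilityMeasure (radMeasure n m) := by unfold radMeasure; infer_instance
  have : Nonempty ι := ⟨hzero.choose⟩
  have hn' : (0 : ℝ) < n := by exact_mod_cast hn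
  have hm' : (0 : ℝ) < m := by exact_mod_cast hm
  set z := zhat f S with hz
  set N := ⨆ l : ι, ∑ k : Fin m, |f l (S k)| with hN
  have hbdd : BddAbove (Set.range fun p : ι × Fin m => |f p.1 (S p.2)|) := by
    refine ⟨max (-a) b, ?_⟩
    rintro _ ⟨p, rfl⟩
    have h := hrange p.1 (S p.2)
    exact abs_le.2 ⟨by linarith [h.1, le_max_left (-a) b], h.2.trans (le_max_right _ _)⟩
  let v : ι → Fin m → ℝ := fun l k => f l (S k)
  have hv : ∀ l k, |v l k| ≤ z := fun l k => le_ciSup hbdd (l, k)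
  have hz0 : 0 ≤ z := Real.iSup_nonneg fun p => abs_nonneg _
  have hN0 : 0 ≤ N := Real.iSup_nonneg fun l => Finset.sum_nonneg fun k _ => abs_nonneg _
  rcases hz0.eq_or_lt with h0 | hzpos
  -- if `ẑ(S) = 0`, the right-hand side is `exp (_ / 0) = 1`
  · rw [← h0]
    simp only [mul_zero, zero_mul, div_zero, Real.exp_zero]
    exact measureReal_le_one
  let g : (Fin n → Fin m → Bool) → ℝ := fun σ => ∑ j, rowSup v (σ j)
  have hmc : ∀ σ, mcera f n m S σ = (n : ℝ)⁻¹ * (m : ℝ)⁻¹ * g σ := by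
    intro σ
    simp only [mcera, g, rowSup, v]
    rw [mul_assoc]
    congr 1
    rw [Finset.mul_sum]
    simp_rw [Real.mul_iSup_of_nonneg (inv_nonneg.2 hm'.le)]
  have hera : era f n m S = (n : ℝ)⁻¹ * (m : ℝ)⁻¹ * mean g := by
    rw [era, integral_radMeasure, ← mean_const_mul]
    congr 1
    funext σ
    exact hmc σ
  have hnu : nuhat f S = (m : ℝ)⁻¹ * N := rfl
  -- scaling by `2 ẑ(S)` makes single flips cost at most `1`; the shift by `n N` turns
  -- `Σ (g - g_{j,i}) ≤ g + n N` into the self-bounding inequality `Σ (W - W_{j,i}) ≤ W`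
  let W : (Fin n → Fin m → Bool) → ℝ := fun σ => (2 * z)⁻¹ * (g σ + n * N)
  have hmeanW : mean W = (2 * z)⁻¹ * (mean g + n * N) := by
    simp only [W]
    rw [mean_const_mul, mean_add]
    congr 2
    simp [mean]
  have hgmean : mean g = n * m * era f n m S := by rw [hera]; field_simp
  have hgflip : ∀ j i σ, g σ - g (flipEntry (j, i) σ) =
      rowSup v (σ j) - rowSup v (flipRow i (σ j)) := by
    intro j i σ
    simp only [g]
    rw [← Finset.sum_sub_distrib, Finset.sum_eq_single j]
    · rw [flipEntry_same]
    · intro j' _ h; rw [flipEntry_ne _ _ _ h, sub_self]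
    · simp
  have hWflip : ∀ j i σ, W σ - W (flipEntry (j, i) σ) =
      (2 * z)⁻¹ * (rowSup v (σ j) - rowSup v (flipRow i (σ j))) := by
    intro j i σ
    rw [← hgflip]; simp only [W]; ring
  have hd : ∀ p x, W x - W (flipEntry p x) ≤ 1 := by
    rintro ⟨j, i⟩ x
    rw [hWflip, inv_mul_le_iff₀ (by positivity), mul_one]
    exact rowSup_sub_le v hv _ _
  have hsub_min : ∀ x y : ℝ, x - min x y = max 0 (x - y) := by
    intro x y
    rcases le_total x y with h | h <;> simp [h]
  have hsb : ∀ x, ∑ p, (W x - min (W x) (W (flipEntry p x))) ≤ W x := by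
    intro x
    calc ∑ p, (W x - min (W x) (W (flipEntry p x)))
        = (2 * z)⁻¹ * ∑ j, ∑ i, (rowSup v (x j) -
            min (rowSup v (x j)) (rowSup v (flipRow i (x j)))) := by
          rw [Fintype.sum_prod_type, Finset.mul_sum]
          refine Finset.sum_congr rfl fun j _ => ?_
          rw [Finset.mul_sum]
          refine Finset.sum_congr rfl fun i _ => ?_
          rw [hsub_min, hsub_min, hWflip, mul_max_of_nonneg _ _ (by positivity), mul_zero]
      _ ≤ (2 * z)⁻¹ * ∑ j, (rowSup v (x j) + N) :=
          mul_le_mul_of_nonneg_left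
            (Finset.sum_le_sum fun j _ => sum_rowSup_sub_min_le v hv (x j)) (by positivity)
      _ = W x := by simp [W, g, Finset.sum_add_distrib]
  have hRpos : 0 < era f n m S := hε0.trans_le hε
  have hE : 0 < mean W := by
    rw [hmeanW, hgmean]; positivity
  have ht : 0 < (2 * z)⁻¹ * (n * m * ε) := by positivity
  have hfin := lower_tail W hd hsb hE ht
  have hset : {σ : Fin n → Fin m → Bool | era f n m S ≥ mcera f n m S σ + ε} =
      {σ | W σ ≤ mean W - (2 * z)⁻¹ * (n * m * ε)} := by
    ext σ
    simp only [Set.mem_ofPred_eq, ge_iff_le]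
    have e : mean W - (2 * z)⁻¹ * (n * m * ε) - W σ =
        (2 * z)⁻¹ * (n * m) * (era f n m S - (mcera f n m S σ + ε)) := by
      rw [hmeanW, hgmean, hmc]
      simp only [W]
      field_simp
      ring
    have hc : 0 < (2 * z)⁻¹ * ((n : ℝ) * m) := by positivity
    rw [← sub_nonneg, ← sub_nonneg (a := mean W - (2 * z)⁻¹ * (n * m * ε)), e,
      mul_nonneg_iff_of_pos_left hc]
  rw [hset]
  refine hfin.trans (le_of_eq ?_)
  congr 1
  have hRN : era f n m S + nuhat f S ≠ 0 := by
    rw [hnu]; positivity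
  have hmw : mean W = (2 * z)⁻¹ * (n * m * (era f n m S + nuhat f S)) := by
    rw [hmeanW, hgmean, hnu]; field_simp
  rw [hmw]
  field_simp
  ring
end
end
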